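/- arXiv:1809.03089 — 3 statements merged into one kernel-verified Lean document; each statement's English description precedes it below -/
import Mathlib

section
/- There exists an absolute constant C such that the following holds. Suppose that f : M_{(k,n−k)} → {0,1} is a function on the slice (the multislice with ℓ = 2 colours and weights κ_1 = k, κ_2 = n−k) satisfying ‖f^{>1}‖² = ε, where 2 ≤ k ≤ n/2. Then there exists a set S ⊆ [n] of cardinality at most max(1, C√ε·(n/k)) such that either f or 1−f is Cε-close (in squared L² distance with respect to the uniform measure) to the function u ↦ max_{j∈S} x_{j1}(u), i.e. the indicator that u_j = 1 for some j ∈ S. -/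
open Finset

noncomputable section

/-- The multislice: vectors in `[ℓ]^n` whose colour counts are given by `κ`. -/
def multislice (ℓ n : ℕ) (κ : Fin ℓ → ℕ) : Finset (Fin n → Fin ℓ) :=
  Finset.univ.filter fun u => ∀ i, (Finset.univ.filter fun j => u j = i).card = κ i

/-- Expectation with respect to the uniform measure on the multislice. -/
def msExp (ℓ n : ℕ) (κ : Fin ℓ → ℕ) (f : (Fin n → Fin ℓ) → ℝ) : ℝ :=
  (∑ u ∈ multislice ℓ n κ, f u) / ((multislice ℓ n κ).card : ℝ)

/-- The indicator variable `x_{ji}`. -/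
def xvar (ℓ n : ℕ) (j : Fin n) (i : Fin ℓ) (u : Fin n → Fin ℓ) : ℝ :=
  if u j = i then 1 else 0

/-- A function on the multislice has degree one if it is of the form
`c + ∑_j ∑_i c_{ji} x_{ji}`. -/
def degreeOne (ℓ n : ℕ) (κ : Fin ℓ → ℕ) (f : (Fin n → Fin ℓ) → ℝ) : Prop :=
  ∃ (c : ℝ) (coef : Fin n → Fin ℓ → ℝ), ∀ u ∈ multislice ℓ n κ,
    f u = c + ∑ j, ∑ i, coef j i * xvar ℓ n j i u

/-- Distance of a real number to the set `{0,1}`. -/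
def dist01 (x : ℝ) : ℝ := min |x| |x - 1|

/-- A function is Boolean on the multislice if it takes values in `{0,1}` there. -/
def booleanOn (ℓ n : ℕ) (κ : Fin ℓ → ℕ) (g : (Fin n → Fin ℓ) → ℝ) : Prop :=
  ∀ u ∈ multislice ℓ n κ, g u = 0 ∨ g u = 1

/-- A dictator: a function depending on at most one coordinate. -/
def dictator (ℓ n : ℕ) (κ : Fin ℓ → ℕ) (g : (Fin n → Fin ℓ) → ℝ) : Prop :=
  ∃ j : Fin n, ∀ u ∈ multislice ℓ n κ, ∀ v ∈ multislice ℓ n κ, u j = v j → g u = g v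

/-! ### The cube lemma -/

/-- signs -/
def sgb (b : Bool) : ℝ := if b then 1 else -1

/-- squared distance to `{0, 1, -1}` -/
def Phi (z : ℝ) : ℝ := min (z ^ 2) ((|z| - 1) ^ 2)

/-- signed sums -/
def lin {k : ℕ} (d : Fin k → ℝ) (T : Finset (Fin k)) (r : Fin k → Bool) : ℝ :=
  ∑ i ∈ T, sgb (r i) * d i

/-- flipping a set of coordinates -/
def flipFun {k : ℕ} (T : Finset (Fin k)) (r : Fin k → Bool) : Fin k → Bool :=
  fun i => if i ∈ T then !(r i) else r i

lemma flipFun_invol {k : ℕ} (T : Finset (Fin k)) : Function.Involutive (flipFun T) := by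
  intro r
  funext i
  by_cases h : i ∈ T <;> simp [flipFun, h]

lemma sum_flip {k : ℕ} (T : Finset (Fin k)) (G : (Fin k → Bool) → ℝ) :
    ∑ r, G (flipFun T r) = ∑ r, G r :=
  Equiv.sum_comp (flipFun_invol T).toPerm G

lemma sgb_not (b : Bool) : sgb (!b) = - sgb b := by cases b <;> simp [sgb]

lemma sgb_sq (b : Bool) : sgb b ^ 2 = 1 := by cases b <;> simp [sgb]

lemma lin_flip_of_notMem {k : ℕ} (d : Fin k → ℝ) (T : Finset (Fin k)) (i : Fin k) (hi : i ∉ T)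
    (r : Fin k → Bool) : lin d T (flipFun {i} r) = lin d T r := by
  unfold lin
  apply Finset.sum_congr rfl
  intro j hj
  have : j ≠ i := fun h => hi (h ▸ hj)
  simp [flipFun, this]

lemma sum_sgb_mul {k : ℕ} (d : Fin k → ℝ) (T : Finset (Fin k)) (i : Fin k) (hi : i ∉ T)
    (h : ℝ → ℝ) : ∑ r, sgb (r i) * h (lin d T r) = 0 := by
  have h1 := sum_flip {i} (fun r => sgb (r i) * h (lin d T r))
  simp only [lin_flip_of_notMem d T i hi] at h1
  have h2 : ∀ r : Fin k → Bool, sgb (flipFun {i} r i) = - sgb (r i) := by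
    intro r; simp [flipFun, sgb_not]
  simp only [h2, neg_mul, Finset.sum_neg_distrib] at h1
  linarith

lemma lin_insert {k : ℕ} (d : Fin k → ℝ) (T : Finset (Fin k)) (i : Fin k) (hi : i ∉ T)
    (r : Fin k → Bool) : lin d (insert i T) r = sgb (r i) * d i + lin d T r := by
  unfold lin
  rw [Finset.sum_insert hi]

lemma sum_lin_sq {k : ℕ} (d : Fin k → ℝ) (T : Finset (Fin k)) :
    ∑ r, lin d T r ^ 2 = 2 ^ k * ∑ i ∈ T, d i ^ 2 := by
  induction T using Finset.induction_on with
  | empty => simp [lin]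
  | insert i T hi ih =>
    have h1 := sum_sgb_mul d T i hi (fun x => x)
    have h2 : ∀ r : Fin k → Bool, lin d (insert i T) r ^ 2
        = d i ^ 2 + 2 * d i * (sgb (r i) * lin d T r) + lin d T r ^ 2 := by
      intro r
      rw [lin_insert d T i hi]
      linear_combination (d i ^ 2) * sgb_sq (r i)
    simp only [h2, Finset.sum_add_distrib, ← Finset.mul_sum, h1, ih, Finset.sum_insert hi]
    simp
    ring

lemma sum_lin_four {k : ℕ} (d : Fin k → ℝ) (T : Finset (Fin k)) :
    ∑ r, lin d T r ^ 4 ≤ 2 ^ k * (3 * (∑ i ∈ T, d i ^ 2) ^ 2) := by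
  induction T using Finset.induction_on with
  | empty => simp [lin]
  | insert i T hi ih =>
    have h1 := sum_sgb_mul d T i hi (fun x => x)
    have h3 := sum_sgb_mul d T i hi (fun x => x ^ 3)
    have hs := sum_lin_sq d T
    have h2 : ∀ r : Fin k → Bool, lin d (insert i T) r ^ 4
        = d i ^ 4 + 4 * d i ^ 3 * (sgb (r i) * lin d T r) + 6 * d i ^ 2 * lin d T r ^ 2
          + 4 * d i * (sgb (r i) * lin d T r ^ 3) + lin d T r ^ 4 := by
      intro r
      rw [lin_insert d T i hi]
      have := sgb_sq (r i)
      have h3 : sgb (r i) ^ 3 = sgb (r i) := by rw [pow_succ, this, one_mul]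
      have h4 : sgb (r i) ^ 4 = 1 := by
        have : sgb (r i) ^ 4 = (sgb (r i) ^ 2) ^ 2 := by ring
        rw [this, sgb_sq]; norm_num
      linear_combination (d i ^ 4) * h4 + 4 * d i ^ 3 * lin d T r * h3
        + 6 * d i ^ 2 * lin d T r ^ 2 * this
    simp only [h2, Finset.sum_add_distrib, ← Finset.mul_sum, h1, h3, hs, Finset.sum_insert hi]
    simp only [sum_const, card_univ, Fintype.card_pi, Fintype.card_bool, prod_const,
      Fintype.card_fin, nsmul_eq_mul, Nat.cast_pow, Nat.cast_ofNat]
    have hp : (0:ℝ) < 2 ^ k := by positivity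
    have : (0:ℝ) ≤ 2 ^ k * (d i ^ 4) := by positivity
    nlinarith

lemma Phi_nonneg (z : ℝ) : 0 ≤ Phi z := le_min (sq_nonneg _) (sq_nonneg _)

lemma Phi_ge_quartic (z : ℝ) : z ^ 2 - 2 * z ^ 4 ≤ Phi z := by
  unfold Phi
  apply le_min
  · nlinarith [sq_nonneg (z^2)]
  · have h : z ^ 2 = |z| ^ 2 := (sq_abs z).symm
    have h4 : z ^ 4 = |z| ^ 4 := by rw [show z ^ 4 = (z^2)^2 by ring, h]; ring
    rw [h, h4]
    generalize |z| = w
    nlinarith [sq_nonneg (w ^ 2 - 2/5), sq_nonneg (w - 5/8)]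

lemma Phi_ge_half (z : ℝ) : z ^ 2 / 2 - 1 ≤ Phi z := by
  unfold Phi
  apply le_min
  · nlinarith [sq_nonneg z]
  · have h : z ^ 2 = |z| ^ 2 := (sq_abs z).symm
    rw [h]
    nlinarith [sq_nonneg (|z| - 2)]

lemma Phi_le_sq (z : ℝ) : Phi z ≤ z ^ 2 := min_le_left _ _

lemma Phi_le_of_int (z t : ℝ) (ht : t = 0 ∨ t = 1 ∨ t = -1) : Phi z ≤ (z - t) ^ 2 := by
  rcases ht with rfl | rfl | rfl
  · simpa using Phi_le_sq z
  · refine (min_le_right _ _).trans ?_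
    have := sq_abs z
    have := le_abs_self z
    nlinarith
  · refine (min_le_right _ _).trans ?_
    have := sq_abs z
    have := neg_le_abs z
    nlinarith

lemma cube_small {k : ℕ} (d : Fin k → ℝ) (η : ℝ)
    (h : ∀ T, ∑ r, Phi (lin d T r) ≤ 4 * η * 2 ^ k) (T : Finset (Fin k))
    (hT : ∑ i ∈ T, d i ^ 2 ≤ 1 / 12) : ∑ i ∈ T, d i ^ 2 ≤ 8 * η := by
  have h1 : ∑ r, (lin d T r ^ 2 - 2 * lin d T r ^ 4) ≤ 4 * η * 2 ^ k :=
    (Finset.sum_le_sum fun r _ => Phi_ge_quartic _).trans (h T)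
  rw [Finset.sum_sub_distrib, ← Finset.mul_sum, sum_lin_sq] at h1
  have h4 := sum_lin_four d T
  have hp : (0:ℝ) < 2 ^ k := by positivity
  set v := ∑ i ∈ T, d i ^ 2
  have hv : 0 ≤ v := Finset.sum_nonneg fun i _ => sq_nonneg _
  have h5 : 2 ^ k * (v - 6 * v ^ 2) ≤ 2 ^ k * (4 * η) := by nlinarith
  have h6 := le_of_mul_le_mul_left h5 hp
  nlinarith

lemma cube_large {k : ℕ} (d : Fin k → ℝ) (η : ℝ)
    (h : ∀ T, ∑ r, Phi (lin d T r) ≤ 4 * η * 2 ^ k) (T : Finset (Fin k)) :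
    ∑ i ∈ T, d i ^ 2 ≤ 8 * η + 2 := by
  have h1 : ∑ r, (lin d T r ^ 2 / 2 - 1) ≤ 4 * η * 2 ^ k :=
    (Finset.sum_le_sum fun r _ => Phi_ge_half _).trans (h T)
  rw [Finset.sum_sub_distrib, ← Finset.sum_div, sum_lin_sq] at h1
  simp only [sum_const, card_univ, Fintype.card_pi, Fintype.card_bool, prod_const,
      Fintype.card_fin, nsmul_eq_mul, Nat.cast_pow, Nat.cast_ofNat] at h1
  have hp : (0:ℝ) < 2 ^ k := by positivity
  set v := ∑ i ∈ T, d i ^ 2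
  have h5 : 2 ^ k * (v) ≤ 2 ^ k * (8 * η + 2) := by nlinarith
  exact le_of_mul_le_mul_left h5 hp

lemma cube_single {k : ℕ} (d : Fin k → ℝ) (η : ℝ)
    (h : ∀ T, ∑ r, Phi (lin d T r) ≤ 4 * η * 2 ^ k) (i : Fin k) : Phi (d i) ≤ 4 * η := by
  have h1 := h {i}
  have h2 : ∀ r : Fin k → Bool, Phi (lin d {i} r) = Phi (d i) := by
    intro r
    simp only [lin, Finset.sum_singleton]
    cases r i <;> simp [sgb, Phi]
  simp only [h2] at h1
  simp only [sum_const, card_univ, Fintype.card_pi, Fintype.card_bool, prod_const,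
      Fintype.card_fin, nsmul_eq_mul, Nat.cast_pow, Nat.cast_ofNat] at h1
  have hp : (0:ℝ) < 2 ^ k := by positivity
  nlinarith

lemma Phi_dichotomy (z : ℝ) (h : Phi z ≤ 1 / 250) :
    (|z| < 1 / 2 ∧ z ^ 2 ≤ 1 / 250 ∧ Phi z = z ^ 2) ∨ (9 / 10 ≤ |z| ∧ |z| ≤ 11 / 10) := by
  unfold Phi at *
  rcases le_total (z ^ 2) ((|z| - 1) ^ 2) with h1 | h1
  · rw [min_eq_left h1] at h ⊢
    left
    refine ⟨?_, h, rfl⟩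
    rw [← sq_abs] at h
    nlinarith [abs_nonneg z]
  · rw [min_eq_right h1] at h
    right
    constructor <;> nlinarith

lemma cube_two {k : ℕ} (d : Fin k → ℝ) (η : ℝ) (hη : η < 1 / 1000)
    (h : ∀ T, ∑ r, Phi (lin d T r) ≤ 4 * η * 2 ^ k) (i j : Fin k) (hij : i ≠ j)
    (hi : 1 / 2 ≤ |d i|) (hj : 1 / 2 ≤ |d j|) : False := by
  have key : ∀ i : Fin k, 1 / 2 ≤ |d i| → 9 / 10 ≤ |d i| ∧ |d i| ≤ 11 / 10 := by
    intro i hi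
    rcases Phi_dichotomy (d i) ((cube_single d η h i).trans (by linarith)) with h1 | h1
    · linarith [h1.1]
    · exact h1
  have ki := key i hi
  have kj := key j hj
  -- pair up each sign pattern with its flip at `i`
  have h1 := h {i, j}
  have h2 := sum_flip {i} (fun r => Phi (lin d {i, j} r))
  have h3 : ∀ r : Fin k → Bool, (1 / 2 : ℝ) ≤ Phi (lin d {i, j} (flipFun {i} r))
      + Phi (lin d {i, j} r) := by
    intro r
    have e1 : lin d {i, j} r = sgb (r i) * d i + sgb (r j) * d j := by
      simp [lin, Finset.sum_pair hij]
    have e2 : lin d {i, j} (flipFun {i} r) = - (sgb (r i) * d i) + sgb (r j) * d j := by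
      simp [lin, Finset.sum_pair hij, flipFun, sgb_not, hij.symm]
    have a1 : |sgb (r i) * d i| = |d i| := by cases r i <;> simp [sgb]
    have a2 : |sgb (r j) * d j| = |d j| := by cases r j <;> simp [sgb]
    rw [e1, e2]
    rw [← a1] at ki
    rw [← a2] at kj
    generalize sgb (r i) * d i = x at *
    generalize sgb (r j) * d j = y at *
    have big : ∀ z : ℝ, 18 / 10 ≤ |z| → 1 / 2 ≤ Phi z := by
      intro z hz
      unfold Phi
      apply le_min
      · rw [← sq_abs]; nlinarith
      · nlinarith
    have : 18 / 10 ≤ |x + y| ∨ 18 / 10 ≤ |-x + y| := by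
      rcases abs_cases x with hx | hx <;> rcases abs_cases y with hy | hy
      · left; rw [le_abs]; left; linarith
      · right; rw [le_abs]; right; linarith
      · right; rw [le_abs]; left; linarith
      · left; rw [le_abs]; right; linarith
    rcases this with h | h
    · linarith [big _ h, Phi_nonneg (-x + y)]
    · linarith [big _ h, Phi_nonneg (x + y)]
  have h4 : ∑ r : Fin k → Bool, (1 / 2 : ℝ) ≤ ∑ r, (Phi (lin d {i, j} (flipFun {i} r))
      + Phi (lin d {i, j} r)) := Finset.sum_le_sum fun r _ => h3 r
  rw [Finset.sum_add_distrib, h2] at h4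
  simp only [sum_const, card_univ, Fintype.card_pi, Fintype.card_bool, prod_const,
      Fintype.card_fin, nsmul_eq_mul, Nat.cast_pow, Nat.cast_ofNat] at h4
  have hp : (0:ℝ) < 2 ^ k := by positivity
  nlinarith

lemma cube_main {k : ℕ} (d : Fin k → ℝ) (η : ℝ)
    (h : ∀ T, ∑ r, Phi (lin d T r) ≤ 4 * η * 2 ^ k) :
    ∑ i, Phi (d i) ≤ 10000 * η ∧
      ((Finset.univ.filter fun i => 1 / 2 ≤ |d i|).card : ℝ) - 1 ≤ 10000 * η := by
  have hη0 : 0 ≤ η := by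
    have h1 := h ∅
    have hp : (0:ℝ) < 2 ^ k := by positivity
    have h2 : 0 ≤ ∑ r, Phi (lin d ∅ r) := Finset.sum_nonneg fun r _ => Phi_nonneg _
    by_contra hc
    push Not at hc
    nlinarith
  rcases le_or_gt (1 / 1000) η with hη | hη
  · have hv := cube_large d η h Finset.univ
    constructor
    · have : ∑ i, Phi (d i) ≤ ∑ i, d i ^ 2 := Finset.sum_le_sum fun i _ => Phi_le_sq _
      linarith
    · have : ((Finset.univ.filter fun i => 1 / 2 ≤ |d i|).card : ℝ) * (1/4) ≤ ∑ i, d i ^ 2 := by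
        rw [← nsmul_eq_mul]
        refine (Finset.card_nsmul_le_sum _ (fun i => d i ^ 2) _ ?_).trans
          (Finset.sum_le_sum_of_subset_of_nonneg (Finset.filter_subset _ _) ?_)
        · intro i hi
          have := (Finset.mem_filter.mp hi).2
          rw [← sq_abs]; nlinarith
        · intros; positivity
      linarith
  · have hcard : (Finset.univ.filter fun i => 1 / 2 ≤ |d i|).card ≤ 1 := by
      rw [Finset.card_le_one]
      intro i hi j hj
      by_contra hij
      exact cube_two d η hη h i j hij (Finset.mem_filter.mp hi).2 (Finset.mem_filter.mp hj).2
    refine ⟨?_, ?_⟩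
    · have hsmall : ∀ T : Finset (Fin k), (∀ i ∈ T, |d i| < 1 / 2) →
          ∑ i ∈ T, d i ^ 2 ≤ 8 * η := by
        intro T
        induction T using Finset.induction_on with
        | empty => intro _; simpa using hη0
        | insert i T hi ih =>
          intro hT
          have ih' := ih fun j hj => hT j (Finset.mem_insert_of_mem hj)
          apply cube_small d η h
          rw [Finset.sum_insert hi]
          rcases Phi_dichotomy (d i) ((cube_single d η h i).trans (by linarith)) with h1 | h1
          · linarith [h1.2.1]
          · linarith [hT i (Finset.mem_insert_self _ _)]
      rw [← Finset.sum_filter_add_sum_filter_not Finset.univ (fun i => 1 / 2 ≤ |d i|)]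
      have e1 : ∑ i with 1 / 2 ≤ |d i|, Phi (d i) ≤ 4 * η := by
        have := Finset.sum_le_card_nsmul (Finset.univ.filter fun i => 1 / 2 ≤ |d i|)
          (fun i => Phi (d i)) (4 * η) (fun i _ => cube_single d η h i)
        refine this.trans ?_
        rw [nsmul_eq_mul]
        have : ((Finset.univ.filter fun i => 1 / 2 ≤ |d i|).card : ℝ) ≤ 1 := by
          exact_mod_cast hcard
        nlinarith
      have e2 : ∑ i with ¬ 1 / 2 ≤ |d i|, Phi (d i) ≤ 8 * η := by
        refine (Finset.sum_le_sum fun i _ => Phi_le_sq _).trans (hsmall _ ?_)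
        intro i hi
        have := (Finset.mem_filter.mp hi).2
        linarith
      linarith
    · have : ((Finset.univ.filter fun i => 1 / 2 ≤ |d i|).card : ℝ) ≤ 1 := by
        exact_mod_cast hcard
      linarith

/-! ### Averaging over permutations -/

/-- average over permutations -/
def pE (n : ℕ) (G : Equiv.Perm (Fin n) → ℝ) : ℝ := (∑ π, G π) / (n.factorial : ℝ)

lemma pE_add (n : ℕ) (G H : Equiv.Perm (Fin n) → ℝ) :
    pE n (fun π => G π + H π) = pE n G + pE n H := by
  simp [pE, Finset.sum_add_distrib, add_div]

lemma pE_sub (n : ℕ) (G H : Equiv.Perm (Fin n) → ℝ) :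
    pE n (fun π => G π - H π) = pE n G - pE n H := by
  simp [pE, Finset.sum_sub_distrib, sub_div]

lemma pE_const_mul (n : ℕ) (c : ℝ) (G : Equiv.Perm (Fin n) → ℝ) :
    pE n (fun π => c * G π) = c * pE n G := by
  simp [pE, ← Finset.mul_sum, mul_div_assoc]

lemma pE_sum (n : ℕ) {ι : Type*} (s : Finset ι) (G : ι → Equiv.Perm (Fin n) → ℝ) :
    pE n (fun π => ∑ i ∈ s, G i π) = ∑ i ∈ s, pE n (G i) := by
  simp only [pE]
  rw [Finset.sum_comm, Finset.sum_div]

lemma pE_mono (n : ℕ) (G H : Equiv.Perm (Fin n) → ℝ) (h : ∀ π, G π ≤ H π) :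
    pE n G ≤ pE n H := by
  unfold pE
  gcongr
  exact h _

lemma pE_const (n : ℕ) (c : ℝ) : pE n (fun _ => c) = c := by
  have : (n.factorial : ℝ) ≠ 0 := by exact_mod_cast n.factorial_ne_zero
  simp [pE, Fintype.card_perm]
  field_simp

lemma pE_nonneg (n : ℕ) (G : Equiv.Perm (Fin n) → ℝ) (h : ∀ π, 0 ≤ G π) : 0 ≤ pE n G := by
  unfold pE
  have := Finset.sum_nonneg fun π (_ : π ∈ Finset.univ) => h π
  positivity

lemma pE_mul_right (n : ℕ) (G : Equiv.Perm (Fin n) → ℝ) (σ : Equiv.Perm (Fin n)) :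
    pE n (fun π => G (π * σ)) = pE n G := by
  unfold pE
  rw [Equiv.sum_comp (Equiv.mulRight σ) G |>.symm]
  rfl

lemma pE_emb {n r : ℕ} (ι : Fin r ↪ Fin n) (F : (Fin r ↪ Fin n) → ℝ) :
    pE n (fun π => F (π • ι)) = (∑ β, F β) / (n.descFactorial r : ℝ) := by
  have h1 : ∀ ι' : Fin r ↪ Fin n, pE n (fun π => F (π • ι')) = pE n (fun π => F (π • ι)) := by
    intro ι'
    obtain ⟨σ, hσ⟩ := Equiv.Perm.exists_smul_eq_embedding ι ι'
    rw [← pE_mul_right n (fun π => F (π • ι)) σ]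
    simp only [mul_smul, hσ]
  have h2 : ∑ ι' : Fin r ↪ Fin n, pE n (fun π => F (π • ι')) = ∑ β, F β := by
    rw [← pE_sum]
    have : ∀ π : Equiv.Perm (Fin n), ∑ i : Fin r ↪ Fin n, F (π • i) = ∑ β, F β := by
      intro π
      exact Equiv.sum_comp (MulAction.toPerm π) F
    simp only [this, pE_const]
  simp only [h1] at h2
  rw [Finset.sum_const, card_univ, Fintype.card_embedding_eq, nsmul_eq_mul] at h2
  simp only [Fintype.card_fin] at h2
  have hr : r ≤ n := by simpa using Fintype.card_le_of_embedding ι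
  have : (n.descFactorial r : ℝ) ≠ 0 := by
    have := Nat.descFactorial_pos.mpr hr
    positivity
  rw [← h2]
  field_simp

/-- The vector whose zero-coloured positions are the range of `β`. -/
def vec {k n : ℕ} (β : Fin k ↪ Fin n) : Fin n → Fin 2 := fun j => if ∃ i, β i = j then 0 else 1

lemma vec_smul {k n : ℕ} (β : Fin k ↪ Fin n) (π : Equiv.Perm (Fin n)) :
    vec (π • β) = vec β ∘ π.symm := by
  funext j
  simp only [vec, Function.comp, Function.Embedding.smul_apply, Equiv.Perm.smul_def]
  congr 1
  simp only [Equiv.eq_symm_apply]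

lemma mem_ms {k n : ℕ} (u : Fin n → Fin 2) :
    u ∈ multislice 2 n ![k, n - k] ↔
      (Finset.univ.filter fun j => u j = 0).card = k ∧
      (Finset.univ.filter fun j => u j = 1).card = n - k := by
  simp [multislice, Fin.forall_fin_two]

lemma vec_zero_set {k n : ℕ} (β : Fin k ↪ Fin n) :
    (Finset.univ.filter fun j => vec β j = 0) = Finset.univ.map β := by
  ext j
  simp [vec]

lemma vec_mem {k n : ℕ} (β : Fin k ↪ Fin n) : vec β ∈ multislice 2 n ![k, n - k] := by
  have h0 : (Finset.univ.filter fun j => vec β j = 0).card = k := by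
    rw [vec_zero_set]; simp
  rw [mem_ms]
  refine ⟨h0, ?_⟩
  have := Finset.card_filter_add_card_filter_not (s := (Finset.univ : Finset (Fin n)))
    (fun j => vec β j = 0)
  have h3 : (Finset.univ.filter fun j => ¬ vec β j = 0)
      = Finset.univ.filter fun j => vec β j = 1 := by
    ext j
    simp only [Finset.mem_filter, Finset.mem_univ, true_and]
    omega
  rw [h3, h0] at this
  simp at this
  omega

lemma exists_vec {k n : ℕ} (u : Fin n → Fin 2) (hu : u ∈ multislice 2 n ![k, n - k]) :
    ∃ β : Fin k ↪ Fin n, vec β = u := by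
  rw [mem_ms] at hu
  refine ⟨((Finset.univ.filter fun j => u j = 0).orderEmbOfFin hu.1).toEmbedding, ?_⟩
  funext j
  have h := Finset.range_orderEmbOfFin (Finset.univ.filter fun j => u j = 0) hu.1
  have h2 : (∃ i, ((Finset.univ.filter fun j => u j = 0).orderEmbOfFin hu.1) i = j) ↔ u j = 0 := by
    rw [← Set.mem_range, h]; simp
  simp only [vec, RelEmbedding.coe_toEmbedding]
  by_cases h0 : u j = 0
  · rw [if_pos (h2.mpr h0), h0]
  · rw [if_neg (fun h => h0 (h2.mp h))]
    omega

lemma ms_comp {k n : ℕ} (π : Equiv.Perm (Fin n)) (F : (Fin n → Fin 2) → ℝ) :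
    ∑ u ∈ multislice 2 n ![k, n - k], F (u ∘ π.symm) = ∑ u ∈ multislice 2 n ![k, n - k], F u := by
  have key : ∀ (π : Equiv.Perm (Fin n)) (u : Fin n → Fin 2),
      u ∈ multislice 2 n ![k, n - k] → u ∘ π.symm ∈ multislice 2 n ![k, n - k] := by
    intro π u hu
    obtain ⟨β, rfl⟩ := exists_vec u hu
    rw [← vec_smul]
    exact vec_mem _
  refine Finset.sum_bij' (fun u _ => u ∘ π.symm) (fun u _ => u ∘ π) (fun u hu => key π u hu)
    (fun u hu => by simpa using key π.symm u hu) ?_ ?_ ?_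
  · intro u _; funext j; simp
  · intro u _; funext j; simp
  · intro u _; rfl

lemma msExp_eq {k n : ℕ} (α : Fin k ↪ Fin n) (F : (Fin n → Fin 2) → ℝ) :
    msExp 2 n ![k, n - k] F = pE n (fun π => F (vec (π • α))) := by
  have h1 : ∀ u ∈ multislice 2 n ![k, n - k],
      pE n (fun π => F (u ∘ π.symm)) = pE n (fun π => F (vec (π • α))) := by
    intro u hu
    obtain ⟨β, rfl⟩ := exists_vec u hu
    simp only [← vec_smul]
    rw [pE_emb β (fun β => F (vec β)), pE_emb α (fun β => F (vec β))]
  have h2 : ∑ u ∈ multislice 2 n ![k, n - k], pE n (fun π => F (u ∘ π.symm))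
      = ∑ u ∈ multislice 2 n ![k, n - k], F u := by
    rw [← pE_sum]
    simp only [ms_comp, pE_const]
  rw [Finset.sum_congr rfl h1, Finset.sum_const, nsmul_eq_mul] at h2
  unfold msExp
  rw [← h2]
  have : ((multislice 2 n ![k, n - k]).card : ℝ) ≠ 0 := by
    have := Finset.card_pos.mpr ⟨_, vec_mem α⟩
    positivity
  field_simp

lemma pE_pair {n : ℕ} (i i' : Fin n) (hi : i ≠ i') (F : Fin n → Fin n → ℝ) :
    pE n (fun π => F (π i) (π i')) = (∑ a, ∑ b, if a = b then 0 else F a b) / (n * (n - 1)) := by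
  have hinj : ∀ a b : Fin n, a ≠ b → Function.Injective ![a, b] := by
    intro a b hab s t
    fin_cases s <;> fin_cases t <;> simp [hab, hab.symm]
  let ι : Fin 2 ↪ Fin n := ⟨![i, i'], hinj i i' hi⟩
  have h := pE_emb ι (fun β => F (β 0) (β 1))
  simp only [Function.Embedding.smul_apply, Equiv.Perm.smul_def] at h
  have e0 : ι 0 = i := rfl
  have e1 : ι 1 = i' := rfl
  rw [e0, e1] at h
  rw [h]
  congr 1
  · rw [← Finset.sum_product']
    rw [← Finset.sum_filter_add_sum_filter_not _ (fun x : Fin n × Fin n => x.1 = x.2)]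
    rw [Finset.sum_eq_zero (s := Finset.filter (fun x : Fin n × Fin n => x.1 = x.2) _)
      (by intro x hx; rw [if_pos (Finset.mem_filter.mp hx).2]), zero_add]
    refine Finset.sum_bij' (fun β _ => (β 0, β 1))
      (fun x hx => ⟨![x.1, x.2], hinj x.1 x.2 (Finset.mem_filter.mp hx).2⟩) ?_ ?_ ?_ ?_ ?_
    · intro β _
      simp
    · intro x hx; simp
    · intro β _
      ext t
      fin_cases t <;> simp
    · intro x hx; simp
    · intro β _
      rw [if_neg]
      intro h
      have := β.injective h
      simp at this
  · have : 2 ≤ n := by simpa using Fintype.card_le_of_embedding ι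
    simp [Nat.descFactorial]
    rw [Nat.cast_sub (by omega)]
    push_cast
    ring

lemma pE_one {n : ℕ} (i : Fin n) (F : Fin n → ℝ) :
    pE n (fun π => F (π i)) = (∑ a, F a) / n := by
  have h := pE_emb (⟨fun _ : Fin 1 => i, fun a b _ => Subsingleton.elim a b⟩) (fun β => F (β 0))
  have h' : pE n (fun π => F (π i)) = _ := h
  rw [h']
  congr 1
  · refine Finset.sum_bij' (fun β _ => β 0)
      (fun x _ => ⟨fun _ : Fin 1 => x, fun a b _ => Subsingleton.elim a b⟩) ?_ ?_ ?_ ?_ ?_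
    · simp
    · simp
    · intro β _
      ext t
      fin_cases t; rfl
    · intro x _; rfl
    · intro x _; rfl
  · simp

lemma sum_emb_ind {X : Type*} [Fintype X] [DecidableEq X] (r : ℕ) (P : Finset X) :
    ∑ γ : Fin r ↪ X, (if ∀ t, γ t ∈ P then (1:ℝ) else 0) = (P.card.descFactorial r : ℝ) := by
  rw [Finset.sum_boole]
  have h := Fintype.card_embedding_eq (α := Fin r) (β := P)
  rw [Fintype.card_fin, Fintype.card_coe] at h
  rw [← h]
  congr 1
  symm
  rw [← Finset.card_univ]
  refine Finset.card_bij' (fun γ _ => γ.trans (Function.Embedding.subtype _))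
    (fun γ hγ => γ.codRestrict (P : Set X) (fun t => (Finset.mem_filter.mp hγ).2 t)) ?_ ?_ ?_ ?_
  · intro γ _
    simp
  · simp
  · intro γ _; ext t; rfl
  · intro γ _; ext t; rfl

/-- number of indices mapped into `P` -/
def cnt {k n : ℕ} (P : Finset (Fin n)) (β : Fin k ↪ Fin n) : ℕ :=
  (Finset.univ.filter fun i => β i ∈ P).card

lemma pE_desc {k n : ℕ} (α : Fin k ↪ Fin n) (P : Finset (Fin n)) (r : ℕ) :
    pE n (fun π => ((cnt P (π • α)).descFactorial r : ℝ)) =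
      (k.descFactorial r : ℝ) * (P.card.descFactorial r : ℝ) / (n.descFactorial r : ℝ) := by
  have h1 : ∀ π : Equiv.Perm (Fin n), ((cnt P (π • α)).descFactorial r : ℝ)
      = ∑ ι : Fin r ↪ Fin k, (if ∀ t, (π • (ι.trans α)) t ∈ P then (1:ℝ) else 0) := by
    intro π
    unfold cnt
    rw [← sum_emb_ind]
    apply Finset.sum_congr rfl
    intro ι _
    congr 1
    refine propext ⟨fun h t => (Finset.mem_filter.mp (h t)).2, fun h t => ?_⟩
    exact Finset.mem_filter.mpr ⟨Finset.mem_univ _, h t⟩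
  simp only [h1]
  rw [pE_sum]
  have h2 : ∀ ι : Fin r ↪ Fin k,
      pE n (fun π => (if ∀ t, (π • (ι.trans α)) t ∈ P then (1:ℝ) else 0))
      = (P.card.descFactorial r : ℝ) / (n.descFactorial r : ℝ) := by
    intro ι
    rw [pE_emb (ι.trans α) (fun β => if ∀ t, β t ∈ P then (1:ℝ) else 0), sum_emb_ind]
  simp only [h2]
  rw [Finset.sum_const, card_univ, Fintype.card_embedding_eq, nsmul_eq_mul]
  simp only [Fintype.card_fin]
  ring

lemma pE_quad {n : ℕ} (a b c d : Fin n) (hinj : Function.Injective ![a, b, c, d])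
    (P L : Finset (Fin n)) (hPL : Disjoint P L) :
    (P.card * (P.card - 1) : ℝ) * (L.card * (L.card - 1)) / ((n * (n - 1)) ^ 2) ≤
    pE n (fun π => if (π a ∈ P ∧ π c ∈ L) ∧ (π b ∈ P ∧ π d ∈ L) then (1:ℝ) else 0) := by
  let ι : Fin 4 ↪ Fin n := ⟨![a, b, c, d], hinj⟩
  have h := pE_emb ι (fun β => if (β 0 ∈ P ∧ β 2 ∈ L) ∧ (β 1 ∈ P ∧ β 3 ∈ L) then (1:ℝ) else 0)
  have h' : pE n (fun π => if (π a ∈ P ∧ π c ∈ L) ∧ (π b ∈ P ∧ π d ∈ L) then (1:ℝ) else 0) = _ := h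
  rw [h']
  have hn : 4 ≤ n := by simpa using Fintype.card_le_of_embedding ι
  have hn' : (4:ℝ) ≤ n := by exact_mod_cast hn
  rw [Finset.sum_boole]
  have hcard : (P.offDiag ×ˢ L.offDiag).card ≤ (Finset.univ.filter fun β : Fin 4 ↪ Fin n =>
      (β 0 ∈ P ∧ β 2 ∈ L) ∧ (β 1 ∈ P ∧ β 3 ∈ L)).card := by
    have hi : ∀ x ∈ P.offDiag ×ˢ L.offDiag, Function.Injective ![x.1.1, x.1.2, x.2.1, x.2.2] := by
      intro x hx
      simp only [Finset.mem_product, Finset.mem_offDiag] at hx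
      have hne : ∀ p ∈ P, ∀ l ∈ L, p ≠ l := fun p hp l hl h =>
        (Finset.disjoint_left.mp hPL hp) (h ▸ hl)
      have q1 := hne _ hx.1.1 _ hx.2.1
      have q2 := hne _ hx.1.1 _ hx.2.2.1
      have q3 := hne _ hx.1.2.1 _ hx.2.1
      have q4 := hne _ hx.1.2.1 _ hx.2.2.1
      have q5 := hx.1.2.2
      have q6 := hx.2.2.2
      intro s t
      fin_cases s <;> fin_cases t <;> simp [q1, q2, q3, q4, q5, q6, q1.symm, q2.symm, q3.symm,
        q4.symm, q5.symm, q6.symm]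
    refine Finset.card_le_card_of_injOn
      (fun x => if hx : x ∈ P.offDiag ×ˢ L.offDiag then
        (⟨![x.1.1, x.1.2, x.2.1, x.2.2], hi x hx⟩ : Fin 4 ↪ Fin n) else ι) ?_ ?_
    · intro x hx
      have hx' : x ∈ P.offDiag ×ˢ L.offDiag := hx
      simp only [dif_pos hx']
      simp only [Finset.mem_product, Finset.mem_offDiag] at hx'
      simp [hx']
    · intro x hx y hy hxy
      have hx' : x ∈ P.offDiag ×ˢ L.offDiag := hx
      have hy' : y ∈ P.offDiag ×ˢ L.offDiag := hy
      simp only [dif_pos hx', dif_pos hy'] at hxy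
      have g := fun t => DFunLike.congr_fun hxy t
      have g0 := g 0
      have g1 := g 1
      have g2 := g 2
      have g3 := g 3
      simp at g0 g1 g2 g3
      ext <;> simp [g0, g1, g2, g3]
  rw [Finset.card_product, Finset.offDiag_card, Finset.offDiag_card] at hcard
  have hcR : (P.card * (P.card - 1) : ℝ) * (L.card * (L.card - 1)) ≤
      ((Finset.univ.filter fun β : Fin 4 ↪ Fin n =>
      (β 0 ∈ P ∧ β 2 ∈ L) ∧ (β 1 ∈ P ∧ β 3 ∈ L)).card : ℝ) := by
    have : (((P.card * P.card - P.card) * (L.card * L.card - L.card) : ℕ) : ℝ) ≤ _ :=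
      Nat.cast_le.mpr hcard
    rw [Nat.cast_mul, Nat.cast_sub (Nat.le_mul_self _), Nat.cast_sub (Nat.le_mul_self _)] at this
    push_cast at this
    refine le_trans (le_of_eq ?_) this
    ring
  have hd : (n.descFactorial 4 : ℝ) ≤ (n * (n - 1)) ^ 2 := by
    obtain ⟨m, rfl⟩ : ∃ m, n = m + 4 := ⟨n - 4, by omega⟩
    simp [Nat.descFactorial]
    have : (0:ℝ) ≤ m := by positivity
    nlinarith [mul_nonneg this this, mul_nonneg (mul_nonneg this this) this]
  have hd0 : (0:ℝ) < n.descFactorial 4 := by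
    have := Nat.descFactorial_pos.mpr hn
    positivity
  gcongr

/-! ### Random subcubes of the slice -/

/-- first element of the `i`-th pair -/
def loIdx {k n : ℕ} (h : 2 * k ≤ n) (i : Fin k) : Fin n := ⟨i, by omega⟩

/-- second element of the `i`-th pair -/
def hiIdx {k n : ℕ} (h : 2 * k ≤ n) (i : Fin k) : Fin n := ⟨i + k, by omega⟩

/-- the vertex of the standard subcube -/
def cubeEmb {k n : ℕ} (h : 2 * k ≤ n) (r : Fin k → Bool) : Fin k ↪ Fin n :=
  ⟨fun i => if r i then loIdx h i else hiIdx h i, by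
    intro i j hij
    have hi := i.2
    have hj := j.2
    dsimp only at hij
    ext
    split_ifs at hij <;> simp [loIdx, hiIdx] at hij <;> omega⟩

lemma cubeEmb_apply {k n : ℕ} (h : 2 * k ≤ n) (r : Fin k → Bool) (i : Fin k) :
    cubeEmb h r i = if r i then loIdx h i else hiIdx h i := rfl

lemma exists_eta {k n : ℕ} (h : 2 * k ≤ n) (f p : (Fin n → Fin 2) → ℝ) (c : ℝ) (a : Fin n → ℝ)
    (hf : ∀ β : Fin k ↪ Fin n, f (vec β) = 0 ∨ f (vec β) = 1)
    (hp : ∀ β : Fin k ↪ Fin n, p (vec β) = c + ∑ i, a (β i)) :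
    ∃ η : Equiv.Perm (Fin n) → ℝ,
      pE n η = msExp 2 n ![k, n - k] (fun u => (f u - p u) ^ 2) ∧
      (∀ π, 0 ≤ η π) ∧
      (∀ π, ∑ i, Phi (a (π (loIdx h i)) - a (π (hiIdx h i))) ≤ 10000 * η π) ∧
      (∀ π, ((Finset.univ.filter fun i =>
        1 / 2 ≤ |a (π (loIdx h i)) - a (π (hiIdx h i))|).card : ℝ) - 1 ≤ 10000 * η π) := by
  let err : (Fin n → Fin 2) → ℝ := fun u => (f u - p u) ^ 2
  let η : Equiv.Perm (Fin n) → ℝ := fun π =>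
    (1 / 2 ^ k) * ∑ r : Fin k → Bool, err (vec (π • cubeEmb h r))
  have hcube : ∀ π (T : Finset (Fin k)), ∑ r, Phi (lin (fun i =>
      a (π (loIdx h i)) - a (π (hiIdx h i))) T r) ≤ 4 * η π * 2 ^ k := by
    intro π T
    have hp2 : (0:ℝ) < 2 ^ k := by positivity
    have e1 : 4 * η π * 2 ^ k = ∑ r : Fin k → Bool,
        (2 * err (vec (π • cubeEmb h r)) + 2 * err (vec (π • cubeEmb h (flipFun T r)))) := by
      rw [Finset.sum_add_distrib, ← Finset.mul_sum, ← Finset.mul_sum,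
        sum_flip T (fun r => err (vec (π • cubeEmb h r)))]
      simp only [η]
      field_simp
      ring
    rw [e1]
    apply Finset.sum_le_sum
    intro r _
    have e2 : lin (fun i => a (π (loIdx h i)) - a (π (hiIdx h i))) T r
        = p (vec (π • cubeEmb h r)) - p (vec (π • cubeEmb h (flipFun T r))) := by
      rw [hp, hp]
      rw [add_sub_add_left_eq_sub, ← Finset.sum_sub_distrib]
      unfold lin
      rw [← Finset.sum_subset (Finset.subset_univ T)]
      · apply Finset.sum_congr rfl
        intro i hi
        simp only [Function.Embedding.smul_apply, Equiv.Perm.smul_def, cubeEmb_apply,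
          flipFun, hi, if_true]
        cases r i <;> simp [sgb]
      · intro i _ hi
        simp [cubeEmb_apply, flipFun, hi]
    rw [e2]
    have e3 := Phi_le_of_int (p (vec (π • cubeEmb h r)) - p (vec (π • cubeEmb h (flipFun T r))))
      (f (vec (π • cubeEmb h r)) - f (vec (π • cubeEmb h (flipFun T r)))) (by
        rcases hf (π • cubeEmb h r) with h1 | h1 <;>
        rcases hf (π • cubeEmb h (flipFun T r)) with h2 | h2 <;> rw [h1, h2] <;> norm_num)
    refine e3.trans ?_
    simp only [err]
    nlinarith [sq_nonneg ((f (vec (π • cubeEmb h r)) - p (vec (π • cubeEmb h r)))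
      + (f (vec (π • cubeEmb h (flipFun T r))) - p (vec (π • cubeEmb h (flipFun T r)))))]
  refine ⟨η, ?_, ?_, fun π => (cube_main _ _ (hcube π)).1, fun π => (cube_main _ _ (hcube π)).2⟩
  · simp only [η]
    rw [pE_const_mul, pE_sum]
    simp only [← msExp_eq _ err]
    simp only [sum_const, card_univ, Fintype.card_pi, Fintype.card_bool, prod_const,
      Fintype.card_fin, nsmul_eq_mul, Nat.cast_pow, Nat.cast_ofNat]
    have hp2 : (0:ℝ) < 2 ^ k := by positivity
    field_simp
    rfl
  · intro π
    have : 0 ≤ ∑ r : Fin k → Bool, err (vec (π • cubeEmb h r)) :=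
      Finset.sum_nonneg fun r _ => sq_nonneg _
    simp only [η]
    positivity

lemma low_bad {n : ℕ} (hn : 4 ≤ n) (a : Fin n → ℝ) :
    4 * (Finset.univ.filter fun b =>
      ¬ (2 ≤ (Finset.univ.filter fun j => a j ≤ a b).card ∧
        n ≤ 4 * (Finset.univ.filter fun j => a j ≤ a b).card)).card ≤ n := by
  set B := (Finset.univ.filter fun b =>
      ¬ (2 ≤ (Finset.univ.filter fun j => a j ≤ a b).card ∧
        n ≤ 4 * (Finset.univ.filter fun j => a j ≤ a b).card)) with hB
  rcases B.eq_empty_or_nonempty with h | h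
  · rw [h]; simp
  · obtain ⟨b, hb, hmax⟩ := Finset.exists_max_image B a h
    have hsub : B ⊆ Finset.univ.filter fun j => a j ≤ a b := by
      intro j hj
      simp [hmax j hj]
    have hc := Finset.card_le_card hsub
    have := (Finset.mem_filter.mp hb).2
    omega

lemma exists_center {n : ℕ} (hn : 4 ≤ n) (a W : Fin n → ℝ) (hW : ∀ j, 0 ≤ W j) (Q : ℝ)
    (hQ : ∑ j, W j ≤ Q) :
    ∃ b, n * W b ≤ 4 * Q ∧
      (2 ≤ (Finset.univ.filter fun j => a j ≤ a b).card ∧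
        n ≤ 4 * (Finset.univ.filter fun j => a j ≤ a b).card) ∧
      (2 ≤ (Finset.univ.filter fun j => a b ≤ a j).card ∧
        n ≤ 4 * (Finset.univ.filter fun j => a b ≤ a j).card) := by
  have h1 := low_bad hn a
  have h2 := low_bad hn (fun j => - a j)
  simp only [neg_le_neg_iff] at h2
  have h3 : 4 * (Finset.univ.filter fun b => ¬ (n * W b ≤ 4 * Q)).card ≤ n := by
    set B := (Finset.univ.filter fun b => ¬ (n * W b ≤ 4 * Q)) with hB
    by_contra hc
    push Not at hc
    have hne : B.Nonempty := by
      rw [← Finset.card_pos]; omega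
    have hQ0 : 0 ≤ Q := le_trans (Finset.sum_nonneg fun j _ => hW j) hQ
    have s1 : ∑ b ∈ B, 4 * Q < ∑ b ∈ B, n * W b := by
      apply Finset.sum_lt_sum_of_nonempty hne
      intro b hb
      have := (Finset.mem_filter.mp hb).2
      linarith
    have s2 : ∑ b ∈ B, W b ≤ Q := (Finset.sum_le_sum_of_subset_of_nonneg
      (Finset.filter_subset _ _) (fun j _ _ => hW j)).trans hQ
    rw [Finset.sum_const, nsmul_eq_mul, ← Finset.mul_sum] at s1
    have hc' : (n:ℝ) < 4 * (B.card : ℝ) := by exact_mod_cast hc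
    have hn0 : (0:ℝ) ≤ n := by positivity
    nlinarith
  by_contra hcon
  push Not at hcon
  have hcov : (Finset.univ : Finset (Fin n)) ⊆
      ((Finset.univ.filter fun b => ¬ (n * W b ≤ 4 * Q)) ∪
      (Finset.univ.filter fun b =>
      ¬ (2 ≤ (Finset.univ.filter fun j => a j ≤ a b).card ∧
        n ≤ 4 * (Finset.univ.filter fun j => a j ≤ a b).card))) ∪
      (Finset.univ.filter fun b =>
      ¬ (2 ≤ (Finset.univ.filter fun j => a b ≤ a j).card ∧
        n ≤ 4 * (Finset.univ.filter fun j => a b ≤ a j).card)) := by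
    intro b _
    simp only [Finset.mem_union, Finset.mem_filter, Finset.mem_univ, true_and]
    by_contra hb
    push Not at hb
    have := hcon b hb.1.1 hb.1.2
    have := this hb.2.1
    omega
  have hc := Finset.card_le_card hcov
  have u1 := Finset.card_union_le ((Finset.univ.filter fun b => ¬ (n * W b ≤ 4 * Q)) ∪
      (Finset.univ.filter fun b =>
      ¬ (2 ≤ (Finset.univ.filter fun j => a j ≤ a b).card ∧
        n ≤ 4 * (Finset.univ.filter fun j => a j ≤ a b).card)))
      (Finset.univ.filter fun b =>
      ¬ (2 ≤ (Finset.univ.filter fun j => a b ≤ a j).card ∧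
        n ≤ 4 * (Finset.univ.filter fun j => a b ≤ a j).card))
  have u2 := Finset.card_union_le ((Finset.univ.filter fun b => ¬ (n * W b ≤ 4 * Q)))
      (Finset.univ.filter fun b =>
      ¬ (2 ≤ (Finset.univ.filter fun j => a j ≤ a b).card ∧
        n ≤ 4 * (Finset.univ.filter fun j => a j ≤ a b).card))
  rw [Finset.card_univ, Fintype.card_fin] at hc
  omega

lemma center_bound {k n : ℕ} (hk : 2 ≤ k) (h : 2 * k ≤ n) (a : Fin n → ℝ)
    (η : Equiv.Perm (Fin n) → ℝ)
    (h1 : ∀ π, ∑ i, Phi (a (π (loIdx h i)) - a (π (hiIdx h i))) ≤ 10000 * η π) :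
    ∃ b, (k : ℝ) / n * (∑ j, Phi (a j - a b)) ≤ 40000 * pE n η ∧
      (2 ≤ (Finset.univ.filter fun j => a j ≤ a b).card ∧
        n ≤ 4 * (Finset.univ.filter fun j => a j ≤ a b).card) ∧
      (2 ≤ (Finset.univ.filter fun j => a b ≤ a j).card ∧
        n ≤ 4 * (Finset.univ.filter fun j => a b ≤ a j).card) := by
  have hm := pE_mono n _ _ h1
  rw [pE_sum, pE_const_mul] at hm
  have hne : ∀ i : Fin k, loIdx h i ≠ hiIdx h i := by
    intro i hi
    simp [loIdx, hiIdx] at hi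
    omega
  have hpair : ∀ i : Fin k, pE n (fun π => Phi (a (π (loIdx h i)) - a (π (hiIdx h i))))
      = (∑ b, ∑ j, Phi (a j - a b)) / (n * (n - 1)) := by
    intro i
    rw [pE_pair _ _ (hne i) (fun x y => Phi (a x - a y))]
    congr 1
    rw [Finset.sum_comm]
    apply Finset.sum_congr rfl
    intro x _
    apply Finset.sum_congr rfl
    intro y _
    split_ifs with hxy
    · subst hxy; simp [Phi]
    · rfl
  simp only [hpair] at hm
  rw [Finset.sum_const, card_univ, Fintype.card_fin, nsmul_eq_mul] at hm
  have hn4 : 4 ≤ n := by omega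
  have hn : (4:ℝ) ≤ n := by exact_mod_cast hn4
  have hk' : (2:ℝ) ≤ k := by exact_mod_cast hk
  obtain ⟨b, hb, hlow, hhigh⟩ := exists_center hn4 a (fun b => ∑ j, Phi (a j - a b))
    (fun b => Finset.sum_nonneg fun j _ => Phi_nonneg _) _ le_rfl
  refine ⟨b, ?_, hlow, hhigh⟩
  set X := ∑ b, ∑ j, Phi (a j - a b)
  have hX : 0 ≤ X := Finset.sum_nonneg fun b _ => Finset.sum_nonneg fun j _ => Phi_nonneg _
  set Y := ∑ j, Phi (a j - a b)
  have hY : Y ≤ 4 * X / n := by rw [le_div_iff₀ (by linarith)]; linarith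
  calc (k:ℝ) / n * Y ≤ k / n * (4 * X / n) := by gcongr
    _ = 4 * (k * (X / (n * n))) := by field_simp
    _ ≤ 4 * (k * (X / (n * (n - 1)))) := by
      gcongr
      · have : (0:ℝ) < n - 1 := by linarith
        positivity
      · linarith
    _ ≤ 40000 * pE n η := by linarith

/-! ### Bounding the exceptional sets -/

lemma hot_ineq (H G : ℕ) (hHG : H ≤ G) (t : ℝ) (ht0 : 0 ≤ t) (ht : (H:ℝ) - 1 ≤ t) :
    (H * (H - 1) : ℝ) / 2 - (G.descFactorial 3 : ℝ) / 3 ≤ t := by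
  have hmono : (H.descFactorial 3 : ℝ) ≤ G.descFactorial 3 := by
    exact_mod_cast Nat.descFactorial_le 3 hHG
  have key : (H * (H - 1) : ℝ) / 2 - (H.descFactorial 3 : ℝ) / 3 ≤ t := by
    rcases H with _ | _ | H
    · simpa using ht0
    · simpa using ht0
    · simp [Nat.descFactorial]
      push_cast at ht
      have h0 : (0:ℝ) ≤ H := by positivity
      have h1 : (0:ℝ) ≤ H * (H - 1) := by
        rcases H with _ | H
        · simp
        · push_cast; have : (0:ℝ) ≤ H := by positivity
          nlinarith
      nlinarith
  linarith

lemma card_offdiag_sum {k : ℕ} (q : Fin k → Prop) [DecidablePred q] :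
    ((Finset.univ.filter q).card * ((Finset.univ.filter q).card - 1) : ℝ)
    = ∑ x ∈ (Finset.univ : Finset (Fin k)).offDiag, if q x.1 ∧ q x.2 then (1:ℝ) else 0 := by
  rw [Finset.sum_boole]
  have : (Finset.univ : Finset (Fin k)).offDiag.filter (fun x => q x.1 ∧ q x.2)
      = (Finset.univ.filter q).offDiag := by
    ext x
    simp only [Finset.mem_filter, Finset.mem_offDiag, Finset.mem_univ, true_and]
    tauto
  rw [this, Finset.offDiag_card, Nat.cast_sub (Nat.le_mul_self _)]
  push_cast
  ring

lemma hot_bound {k n : ℕ} (hk : 2 ≤ k) (h : 2 * k ≤ n) (a : Fin n → ℝ)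
    (η : Equiv.Perm (Fin n) → ℝ) (hη : ∀ π, 0 ≤ η π)
    (h2 : ∀ π, ((Finset.univ.filter fun i =>
        1 / 2 ≤ |a (π (loIdx h i)) - a (π (hiIdx h i))|).card : ℝ) - 1 ≤ 10000 * η π)
    (P L : Finset (Fin n)) (hPL : ∀ x ∈ P, ∀ y ∈ L, 1 / 2 ≤ |a x - a y|)
    (hL2 : 2 ≤ L.card) (hL4 : n ≤ 4 * L.card) (hP : 2 ≤ P.card)
    (hPs : 50 * (k * ((P.card : ℝ) - 2)) ≤ n) :
    ((k : ℝ) * P.card / n) ^ 2 ≤ 5000000 * pE n η := by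
  classical
  have hdisj : Disjoint P L := by
    rw [Finset.disjoint_left]
    intro x hx hy
    have := hPL x hx x hy
    norm_num at this
  let α : Fin k ↪ Fin n := ⟨loIdx h, by intro i j hij; simpa [loIdx, Fin.ext_iff] using hij⟩
  -- pointwise inequality
  have hpt : ∀ π : Equiv.Perm (Fin n),
      (1 / 2) * (∑ x ∈ (Finset.univ : Finset (Fin k)).offDiag,
        if (π (loIdx h x.1) ∈ P ∧ π (hiIdx h x.1) ∈ L) ∧
          (π (loIdx h x.2) ∈ P ∧ π (hiIdx h x.2) ∈ L) then (1:ℝ) else 0)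
      - (1 / 3) * ((cnt P (π • α)).descFactorial 3 : ℝ) ≤ 10000 * η π := by
    intro π
    rw [← card_offdiag_sum (fun i => π (loIdx h i) ∈ P ∧ π (hiIdx h i) ∈ L)]
    have hHG : (Finset.univ.filter fun i : Fin k => π (loIdx h i) ∈ P ∧ π (hiIdx h i) ∈ L).card
        ≤ cnt P (π • α) := by
      apply Finset.card_le_card
      intro i hi
      simp only [Finset.mem_filter, Finset.mem_univ, true_and] at hi ⊢
      exact hi.1
    have hHB : (Finset.univ.filter fun i : Fin k => π (loIdx h i) ∈ P ∧ π (hiIdx h i) ∈ L).card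
        ≤ (Finset.univ.filter fun i =>
        1 / 2 ≤ |a (π (loIdx h i)) - a (π (hiIdx h i))|).card := by
      apply Finset.card_le_card
      intro i hi
      simp only [Finset.mem_filter, Finset.mem_univ, true_and] at hi ⊢
      exact hPL _ hi.1 _ hi.2
    have hHB' : ((Finset.univ.filter fun i : Fin k =>
        π (loIdx h i) ∈ P ∧ π (hiIdx h i) ∈ L).card : ℝ)
        ≤ ((Finset.univ.filter fun i =>
        1 / 2 ≤ |a (π (loIdx h i)) - a (π (hiIdx h i))|).card : ℝ) := by exact_mod_cast hHB
    have := hot_ineq _ _ hHG (10000 * η π) (by linarith [hη π]) (by linarith [h2 π])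
    linarith
  have hm := pE_mono n _ _ hpt
  rw [pE_sub, pE_const_mul, pE_const_mul, pE_const_mul, pE_sum, pE_desc] at hm
  have hq : ∀ x ∈ (Finset.univ : Finset (Fin k)).offDiag,
      (P.card * (P.card - 1) : ℝ) * (L.card * (L.card - 1)) / ((n * (n - 1)) ^ 2) ≤
      pE n (fun π => if (π (loIdx h x.1) ∈ P ∧ π (hiIdx h x.1) ∈ L) ∧
          (π (loIdx h x.2) ∈ P ∧ π (hiIdx h x.2) ∈ L) then (1:ℝ) else 0) := by
    intro x hx
    simp only [Finset.mem_offDiag, Finset.mem_univ, true_and] at hx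
    apply pE_quad _ _ _ _ _ P L hdisj
    have hx' : (x.1 : ℕ) ≠ x.2 := fun h => hx (Fin.ext h)
    have b1 := x.1.2
    have b2 := x.2.2
    intro s t hst
    rw [Fin.ext_iff] at hst
    fin_cases s <;> fin_cases t <;> simp [loIdx, hiIdx] at hst ⊢ <;> omega
  have hq2 := Finset.card_nsmul_le_sum _ _ _ hq
  rw [Finset.offDiag_card, Finset.card_univ, Fintype.card_fin, nsmul_eq_mul,
    Nat.cast_sub (Nat.le_mul_self _)] at hq2
  push_cast at hq2
  have hn4 : 4 ≤ n := by omega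
  have hn : (4:ℝ) ≤ n := by exact_mod_cast hn4
  have hk' : (2:ℝ) ≤ k := by exact_mod_cast hk
  have hkn : (2:ℝ) * k ≤ n := by exact_mod_cast h
  have hp' : (2:ℝ) ≤ P.card := by exact_mod_cast hP
  have hl2 : (2:ℝ) ≤ L.card := by exact_mod_cast hL2
  have hl4 : (n:ℝ) ≤ 4 * L.card := by exact_mod_cast hL4
  -- descending factorials
  have d3 : ∀ m : ℕ, 2 ≤ m → (m.descFactorial 3 : ℝ) = m * (m - 1) * (m - 2) := by
    intro m hm
    obtain ⟨t, rfl⟩ : ∃ t, m = t + 2 := ⟨m - 2, by omega⟩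
    simp [Nat.descFactorial]
    ring
  rw [d3 k hk, d3 P.card hP, d3 n (by omega)] at hm
  have hLr : (1:ℝ) / 28 ≤ L.card * (L.card - 1) / (n * (n - 1)) := by
    rw [div_le_div_iff₀ (by norm_num) (by nlinarith)]
    rcases le_or_gt n 7 with h7 | h7
    · have : (n:ℝ) ≤ 7 := by exact_mod_cast h7
      nlinarith
    · have : (8:ℝ) ≤ n := by exact_mod_cast h7
      nlinarith
  generalize (P.card : ℝ) = p at *
  generalize (L.card : ℝ) = l at *
  have hn1 : (0:ℝ) < n - 1 := by linarith
  have hn2 : (0:ℝ) < n - 2 := by linarith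
  have hn0 : (0:ℝ) < n := by linarith
  set X : ℝ := (k * (k - 1)) * (p * (p - 1)) / (n * (n - 1)) with hXdef
  have hX : 0 ≤ X := by
    have : (0:ℝ) ≤ k - 1 := by linarith
    have : (0:ℝ) ≤ p - 1 := by linarith
    rw [hXdef]
    positivity
  have t1 : X * (1 / 28) ≤ (k * k - k) * (p * (p - 1) * (l * (l - 1)) / (n * (n - 1)) ^ 2) := by
    calc X * (1 / 28) ≤ X * (l * (l - 1) / (n * (n - 1))) := by gcongr
      _ = _ := by rw [hXdef]; field_simp
  have t2 : (k:ℝ) * (k - 1) * (k - 2) * (p * (p - 1) * (p - 2)) / (n * (n - 1) * (n - 2))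
      = X * ((k - 2) * (p - 2) / (n - 2)) := by
    rw [hXdef]; field_simp
  have t3 : ((k:ℝ) - 2) * (p - 2) / (n - 2) ≤ 1 / 50 := by
    rw [div_le_div_iff₀ hn2 (by norm_num)]
    have : k * (p - 2) ≤ n / 50 := by linarith
    have h5 : (n:ℝ) * ((k - 2) * (p - 2)) ≤ (n - 2) * (k * (p - 2)) := by
      have : (0:ℝ) ≤ (n - k) * (p - 2) := mul_nonneg (by linarith) (by linarith)
      nlinarith
    have h6 : (n:ℝ) * ((k - 2) * (p - 2) * 50) ≤ n * (1 * (n - 2)) := by nlinarith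
    exact le_of_mul_le_mul_left h6 hn0
  rw [t2] at hm
  have t4 : X * ((k - 2) * (p - 2) / (n - 2)) ≤ X * (1 / 50) := by gcongr
  have t5 : X ≤ 1120000 * pE n η := by linarith
  have t6 : ((k:ℝ) * p / n) ^ 2 ≤ 4 * X := by
    rw [hXdef, div_pow, ← mul_div_assoc, div_le_div_iff₀ (by positivity) (by positivity)]
    have q1 : (k:ℝ) ^ 2 ≤ 2 * (k * (k - 1)) := by nlinarith
    have q2 : p ^ 2 ≤ 2 * (p * (p - 1)) := by nlinarith
    have q3 : (n:ℝ) * (n - 1) ≤ n ^ 2 := by nlinarith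
    calc ((k:ℝ) * p) ^ 2 * (n * (n - 1)) = (k ^ 2 * p ^ 2) * (n * (n - 1)) := by ring
      _ ≤ ((2 * (k * (k - 1))) * (2 * (p * (p - 1)))) * n ^ 2 := by
        have : (0:ℝ) ≤ k - 1 := by linarith
        have : (0:ℝ) ≤ p - 1 := by linarith
        gcongr
      _ = _ := by ring
  have : 0 ≤ pE n η := pE_nonneg _ _ hη
  linarith

lemma le_of_sq_le_sq' {x y : ℝ} (hxy : x ^ 2 ≤ y ^ 2) (hy : 0 ≤ y) : x ≤ y :=
  le_trans (le_abs_self _) (abs_le_of_sq_le_sq hxy hy)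

lemma hot_grow {k n : ℕ} (hk : 2 ≤ k) (h : 2 * k ≤ n) (a : Fin n → ℝ)
    (η : Equiv.Perm (Fin n) → ℝ) (hη : ∀ π, 0 ≤ η π)
    (h2 : ∀ π, ((Finset.univ.filter fun i =>
        1 / 2 ≤ |a (π (loIdx h i)) - a (π (hiIdx h i))|).card : ℝ) - 1 ≤ 10000 * η π)
    (hsmall : pE n η ≤ 1 / 10 ^ 12)
    (P L : Finset (Fin n)) (hPL : ∀ x ∈ P, ∀ y ∈ L, 1 / 2 ≤ |a x - a y|)
    (hL2 : 2 ≤ L.card) (hL4 : n ≤ 4 * L.card) (hP : 2 ≤ P.card) :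
    ((k : ℝ) * P.card / n) ^ 2 ≤ 5000000 * pE n η := by
  have hn : (4:ℝ) ≤ n := by exact_mod_cast (show 4 ≤ n by omega)
  have key : ∀ m, 2 ≤ m → m ≤ P.card → ((k : ℝ) * m / n) ^ 2 ≤ 5000000 * pE n η := by
    intro m hm
    induction m, hm using Nat.le_induction with
    | base =>
      intro hmP
      obtain ⟨Q, hQP, hQ⟩ := Finset.exists_subset_card_eq hmP
      have := hot_bound hk h a η hη h2 Q L (fun x hx => hPL x (hQP hx)) hL2 hL4 (by omega)
        (by rw [hQ]; push_cast; linarith)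
      rw [hQ] at this
      exact this
    | succ m hm ih =>
      intro hmP
      have ih' := ih (by omega)
      obtain ⟨Q, hQP, hQ⟩ := Finset.exists_subset_card_eq hmP
      have h3 : ((k:ℝ) * m / n) ^ 2 ≤ (1 / 50) ^ 2 := by
        refine ih'.trans ?_
        norm_num at hsmall ⊢
        linarith
      have h4 : (k:ℝ) * m / n ≤ 1 / 50 := le_of_sq_le_sq' h3 (by norm_num)
      rw [div_le_div_iff₀ (by linarith) (by norm_num)] at h4
      have := hot_bound hk h a η hη h2 Q L (fun x hx => hPL x (hQP hx)) hL2 hL4 (by omega)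
        (by
          rw [hQ]; push_cast
          have : (0:ℝ) ≤ k := by positivity
          nlinarith)
      rw [hQ] at this
      exact this
  exact key _ hP le_rfl

/-! ### Conclusion -/

lemma pE_var {k n : ℕ} (hn : 2 ≤ n) (α : Fin k ↪ Fin n) (e : Fin n → ℝ) :
    pE n (fun π => (∑ i, e ((π • α) i) - k * ((∑ j, e j) / n)) ^ 2) ≤ k / n * ∑ j, e j ^ 2 := by
  have hn' : (2:ℝ) ≤ n := by exact_mod_cast hn
  have hn0 : (0:ℝ) < n := by linarith
  set m := (∑ j, e j) / n with hm
  let g : Fin n → ℝ := fun j => e j - m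
  have hg0 : ∑ j, g j = 0 := by
    simp only [g, Finset.sum_sub_distrib, Finset.sum_const, card_univ, Fintype.card_fin,
      nsmul_eq_mul, hm]
    field_simp
    ring
  have hg2 : ∑ j, g j ^ 2 ≤ ∑ j, e j ^ 2 := by
    have e1 : ∀ j, e j ^ 2 = g j ^ 2 + 2 * m * g j + m ^ 2 := by intro j; simp only [g]; ring
    simp only [e1, Finset.sum_add_distrib, ← Finset.mul_sum, hg0]
    have : (0:ℝ) ≤ ∑ i : Fin n, m ^ 2 := Finset.sum_nonneg fun i _ => sq_nonneg _
    linarith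
  have h1 : ∀ π : Equiv.Perm (Fin n), (∑ i, e ((π • α) i) - k * m) ^ 2
      = ∑ i : Fin k, ∑ i' : Fin k, g (π (α i)) * g (π (α i')) := by
    intro π
    rw [← Finset.sum_mul_sum, ← sq]
    congr 1
    simp only [g, Finset.sum_sub_distrib, Finset.sum_const, card_univ, Fintype.card_fin,
      nsmul_eq_mul]
    rfl
  simp only [h1]
  rw [pE_sum]
  have h2 : ∀ i i' : Fin k, pE n (fun π => g (π (α i)) * g (π (α i')))
      ≤ if i = i' then (∑ j, g j ^ 2) / n else 0 := by
    intro i i'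
    split_ifs with hii
    · subst hii
      rw [pE_one (α i) (fun x => g x * g x)]
      simp only [sq]
      exact le_rfl
    · rw [pE_pair (α i) (α i') (fun h => hii (α.injective h)) (fun x y => g x * g y)]
      have e2 : ∑ x, ∑ y, (if x = y then 0 else g x * g y) = - ∑ j, g j ^ 2 := by
        have : ∀ x y, (if x = y then 0 else g x * g y)
            = g x * g y - if x = y then g x * g y else 0 := by
          intro x y; split_ifs <;> simp
        simp only [this, Finset.sum_sub_distrib, ← Finset.mul_sum, hg0, Finset.sum_ite_eq,
          Finset.mem_univ, if_true]
        simp [sq]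
      rw [e2]
      apply div_nonpos_of_nonpos_of_nonneg
      · have : 0 ≤ ∑ j, g j ^ 2 := Finset.sum_nonneg fun i _ => sq_nonneg _
        linarith
      · nlinarith
  calc ∑ i : Fin k, pE n (fun π => ∑ i' : Fin k, g (π (α i)) * g (π (α i')))
      ≤ ∑ i : Fin k, ∑ i' : Fin k, if i = i' then (∑ j, g j ^ 2) / n else 0 := by
        apply Finset.sum_le_sum
        intro i _
        rw [pE_sum]
        exact Finset.sum_le_sum fun i' _ => h2 i i'
    _ = k / n * ∑ j, g j ^ 2 := by
        simp
        ring
    _ ≤ _ := by gcongr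

lemma cnt_union {k n : ℕ} (P N : Finset (Fin n)) (h : Disjoint P N) (β : Fin k ↪ Fin n) :
    cnt (P ∪ N) β = cnt P β + cnt N β := by
  unfold cnt
  rw [← Finset.card_union_of_disjoint]
  · congr 1
    ext i
    simp
  · rw [Finset.disjoint_left]
    intro i hi hi'
    exact Finset.disjoint_left.mp h (Finset.mem_filter.mp hi).2 (Finset.mem_filter.mp hi').2

lemma desc2 (m : ℕ) : (m.descFactorial 2 : ℝ) = m * (m - 1) := by
  rcases m with _ | m
  · simp
  · simp [Nat.descFactorial]; ring

lemma pE_cnt {k n : ℕ} (α : Fin k ↪ Fin n) (P : Finset (Fin n)) :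
    pE n (fun π => (cnt P (π • α) : ℝ)) = k * P.card / n := by
  have := pE_desc α P 1
  simpa using this

lemma pE_cnt2 {k n : ℕ} (α : Fin k ↪ Fin n) (P : Finset (Fin n)) :
    pE n (fun π => (cnt P (π • α) * (cnt P (π • α) - 1) : ℝ))
      = (k * (k - 1)) * (P.card * (P.card - 1)) / (n * (n - 1)) := by
  have := pE_desc α P 2
  simpa only [desc2] using this

lemma zero_prob {k n : ℕ} (hk : 2 ≤ k) (h : 2 * k ≤ n) (α : Fin k ↪ Fin n) (U : Finset (Fin n))
    (hU : U.card ≤ 2 ∨ 2 * (k * U.card) ≤ n) :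
    1 / 8 ≤ pE n (fun π => if cnt U (π • α) = 0 then (1:ℝ) else 0) := by
  have hn : (4:ℝ) ≤ n := by exact_mod_cast (show 4 ≤ n by omega)
  have hkn : (2:ℝ) * k ≤ n := by exact_mod_cast h
  by_cases hc : 2 * (k * U.card) ≤ n
  · have hpt : ∀ π : Equiv.Perm (Fin n), 1 - (cnt U (π • α) : ℝ)
        ≤ if cnt U (π • α) = 0 then (1:ℝ) else 0 := by
      intro π
      split_ifs with h0
      · simp [h0]
      · have : (1:ℝ) ≤ cnt U (π • α) := by exact_mod_cast Nat.one_le_iff_ne_zero.mpr h0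
        linarith
    have hm := pE_mono n _ _ hpt
    rw [pE_sub, pE_const, pE_cnt] at hm
    have : (k:ℝ) * U.card / n ≤ 1 / 2 := by
      rw [div_le_div_iff₀ (by linarith) (by norm_num)]
      have : (2:ℝ) * (k * U.card) ≤ n := by exact_mod_cast hc
      linarith
    linarith
  · have hU2 : U.card = 2 := by
      rcases hU with h1 | h1
      · by_contra hne
        have : U.card ≤ 1 := by omega
        apply hc
        nlinarith
      · exact absurd h1 hc
    have hpt : ∀ π : Equiv.Perm (Fin n), 1 - (cnt U (π • α) : ℝ)
        + (1 / 2) * (cnt U (π • α) * (cnt U (π • α) - 1) : ℝ)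
        - (1 / 6) * ((cnt U (π • α)).descFactorial 3 : ℝ)
        ≤ if cnt U (π • α) = 0 then (1:ℝ) else 0 := by
      intro π
      generalize cnt U (π • α) = s
      rcases s with _ | _ | _ | s
      · simp
      · simp
      · norm_num [Nat.descFactorial]
      · simp [Nat.descFactorial]
        have : (0:ℝ) ≤ s := by positivity
        nlinarith [mul_nonneg this this, mul_nonneg (mul_nonneg this this) this]
    have hm := pE_mono n _ _ hpt
    rw [pE_sub, pE_add, pE_sub, pE_const, pE_cnt, pE_const_mul, pE_const_mul, pE_cnt2, pE_desc,
      hU2] at hm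
    refine le_trans ?_ hm
    have : (Nat.descFactorial 2 3 : ℝ) = 0 := by norm_num [Nat.descFactorial]
    rw [this]
    have hn1 : (0:ℝ) < n - 1 := by linarith
    have hn0 : (0:ℝ) < n := by linarith
    have e : 1 - (k:ℝ) * (2:ℕ) / n + 1 / 2 * (k * (k - 1) * ((2:ℕ) * ((2:ℕ) - 1)) / (n * (n - 1)))
        - 1 / 6 * ((k.descFactorial 3 : ℝ) * 0 / (n.descFactorial 3 : ℝ))
        = (n - k) * (n - k - 1) / (n * (n - 1)) := by
      simp only [mul_zero, zero_div, sub_zero]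
      push_cast
      field_simp
      ring
    rw [e, div_le_div_iff₀ (by norm_num) (by positivity)]
    nlinarith

lemma final_step {k n : ℕ} (hk : 2 ≤ k) (h : 2 * k ≤ n) (α : Fin k ↪ Fin n)
    (P N : Finset (Fin n)) (hPN : Disjoint P N)
    (hsz : 2 * (((P.card : ℝ) + N.card - 1) * (k - 1)) ≤ n - 1)
    (g : (Fin k ↪ Fin n) → ℝ) (hg : ∀ β, g β = 0 ∨ g β = 1) (δ : ℝ)
    (hδ : pE n (fun π => (g (π • α) - ((cnt P (π • α) : ℝ) - cnt N (π • α))) ^ 2) ≤ δ) :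
    pE n (fun π => (g (π • α) - if ∃ j ∈ P, vec (π • α) j = 0 then (1:ℝ) else 0) ^ 2)
      ≤ 3 * δ := by
  have hn : (4:ℝ) ≤ n := by exact_mod_cast (show 4 ≤ n by omega)
  have hk' : (2:ℝ) ≤ k := by exact_mod_cast hk
  have hor : ∀ β : Fin k ↪ Fin n, (∃ j ∈ P, vec β j = 0) ↔ cnt P β ≠ 0 := by
    intro β
    unfold cnt
    rw [Finset.card_ne_zero]
    constructor
    · rintro ⟨j, hj, hv⟩
      have : ∃ i, β i = j := by
        by_contra hne
        simp [vec, hne] at hv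
      obtain ⟨i, rfl⟩ := this
      exact ⟨i, by simpa using hj⟩
    · rintro ⟨i, hi⟩
      exact ⟨β i, by simpa using hi, by simp [vec]⟩
  -- first pointwise inequality
  have p1 : ∀ π : Equiv.Perm (Fin n),
      (g (π • α) - if ∃ j ∈ P, vec (π • α) j = 0 then (1:ℝ) else 0) ^ 2
      ≤ (g (π • α) - ((cnt P (π • α) : ℝ) - cnt N (π • α))) ^ 2 + cnt N (π • α) := by
    intro π
    simp only [hor]
    generalize cnt P (π • α) = s
    generalize cnt N (π • α) = t
    rcases t with _ | t
    · rcases s with _ | s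
      · simp
      · have : (0:ℝ) ≤ s := by positivity
        have e0 : (if s + 1 ≠ 0 then (1:ℝ) else 0) = 1 := if_pos (Nat.succ_ne_zero s)
        rw [e0]; push_cast
        rcases hg (π • α) with h1 | h1 <;> rw [h1] <;> nlinarith
    · have ht : (0:ℝ) ≤ t := by positivity
      have hle : (g (π • α) - if s ≠ 0 then (1:ℝ) else 0) ^ 2 ≤ 1 := by
        rcases hg (π • α) with h1 | h1 <;> rw [h1] <;> split_ifs <;> norm_num
      push_cast
      nlinarith [sq_nonneg (g (π • α) - ((s : ℝ) - (t + 1)))]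
  -- second pointwise inequality
  have p2 : ∀ π : Equiv.Perm (Fin n),
      (cnt N (π • α) : ℝ) - (1 / 2) * (cnt N (π • α) * (cnt N (π • α) - 1) : ℝ)
        - (1 / 2) * (cnt (P ∪ N) (π • α) * (cnt (P ∪ N) (π • α) - 1) : ℝ)
        + (1 / 2) * (cnt P (π • α) * (cnt P (π • α) - 1) : ℝ)
      ≤ (g (π • α) - ((cnt P (π • α) : ℝ) - cnt N (π • α))) ^ 2 := by
    intro π
    rw [cnt_union P N hPN]
    generalize cnt P (π • α) = s
    generalize cnt N (π • α) = t
    have e : (t : ℝ) - (1 / 2) * (t * (t - 1) : ℝ)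
        - (1 / 2) * (((s + t : ℕ) : ℝ) * (((s + t : ℕ) : ℝ) - 1))
        + (1 / 2) * (s * (s - 1) : ℝ) = t * (2 - t - s) := by push_cast; ring
    rw [e]
    have hs : (0:ℝ) ≤ s := by positivity
    rcases t with _ | _ | t
    · simp; positivity
    · rcases s with _ | s
      · rcases hg (π • α) with h1 | h1 <;> rw [h1] <;> norm_num
      · have : (0:ℝ) ≤ s := by positivity
        push_cast
        nlinarith [sq_nonneg (g (π • α) - ((s : ℝ) + 1 - (0 + 1)))]
    · have : (0:ℝ) ≤ t := by positivity
      push_cast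
      nlinarith [sq_nonneg (g (π • α) - ((s : ℝ) - (t + 1 + 1))), mul_nonneg this this,
        mul_nonneg this hs]
  have m1 := pE_mono n _ _ p1
  have m2 := pE_mono n _ _ p2
  rw [pE_add, pE_cnt] at m1
  rw [pE_add, pE_sub, pE_sub, pE_const_mul, pE_const_mul, pE_const_mul, pE_cnt, pE_cnt2, pE_cnt2,
    pE_cnt2, Finset.card_union_of_disjoint hPN] at m2
  have hn1 : (0:ℝ) < n - 1 := by linarith
  have hn0 : (0:ℝ) < n := by linarith
  have hp0 : (0:ℝ) ≤ P.card := by positivity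
  have hN0 : (0:ℝ) ≤ N.card := by positivity
  push_cast at m2
  generalize (P.card : ℝ) = p at *
  generalize (N.card : ℝ) = q at *
  have e : (k:ℝ) * q / n - 1 / 2 * (k * (k - 1) * (q * (q - 1)) / (n * (n - 1)))
      - 1 / 2 * (k * (k - 1) * ((p + q) * (p + q - 1)) / (n * (n - 1)))
      + 1 / 2 * (k * (k - 1) * (p * (p - 1)) / (n * (n - 1)))
      = k * q / n * (1 - (p + q - 1) * (k - 1) / (n - 1)) := by
    field_simp
    ring
  rw [e] at m2
  have h3 : (p + q - 1) * ((k:ℝ) - 1) / (n - 1) ≤ 1 / 2 := by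
    rw [div_le_div_iff₀ hn1 (by norm_num)]; linarith
  have h4 : (k:ℝ) * q / n * (1 / 2) ≤ k * q / n * (1 - (p + q - 1) * (k - 1) / (n - 1)) := by
    gcongr
    linarith
  linarith

lemma size_cond {k n : ℕ} (hk : 2 ≤ k) (h : 2 * k ≤ n) (s t : ℕ) (ε : ℝ) (hε : ε ≤ 1 / 10 ^ 12)
    (hs : 2 ≤ s → ((k:ℝ) * s / n) ^ 2 ≤ 5000000 * ε)
    (ht : 2 ≤ t → ((k:ℝ) * t / n) ^ 2 ≤ 5000000 * ε) :
    (s + t ≤ 2 ∨ 2 * (k * (s + t)) ≤ n) ∧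
    2 * (((s : ℝ) + t - 1) * (k - 1)) ≤ n - 1 := by
  have hn : (0:ℝ) < n := by exact_mod_cast (show 0 < n by omega)
  have conv : ∀ m : ℕ, ((k:ℝ) * m / n) ^ 2 ≤ 5000000 * ε → 400 * (k * m) ≤ n := by
    intro m hm
    have h3 : ((k:ℝ) * m / n) ^ 2 ≤ (1 / 400) ^ 2 := by
      refine hm.trans ?_
      norm_num at hε ⊢
      linarith
    have h4 := le_of_sq_le_sq' h3 (by norm_num)
    rw [div_le_div_iff₀ hn (by norm_num)] at h4
    have : (400:ℝ) * (k * m) ≤ n := by linarith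
    exact_mod_cast this
  have main : (s + t ≤ 2 ∨ 2 * (k * (s + t)) ≤ n) := by
    by_cases h1 : 2 ≤ s
    · have c1 := conv s (hs h1)
      by_cases h2 : 2 ≤ t
      · have c2 := conv t (ht h2)
        right; nlinarith
      · right
        have : k * t ≤ k * s := Nat.mul_le_mul_left _ (by omega)
        nlinarith
    · by_cases h2 : 2 ≤ t
      · have c2 := conv t (ht h2)
        have : k * s ≤ k * t := Nat.mul_le_mul_left _ (by omega)
        right; nlinarith
      · left; omega
  refine ⟨main, ?_⟩
  have hk' : (2:ℝ) ≤ k := by exact_mod_cast hk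
  have hkn : (2:ℝ) * k ≤ n := by exact_mod_cast h
  by_cases hst : s + t ≤ 2
  · have : (s:ℝ) + t ≤ 2 := by exact_mod_cast hst
    nlinarith
  · have h5 : (2:ℝ) * (k * (s + t)) ≤ n := by
      rcases main with h | h
      · exact absurd h hst
      · exact_mod_cast h
    have : (2:ℝ) ≤ s + t := by exact_mod_cast (show 2 ≤ s + t by omega)
    nlinarith

lemma degree_one_form {k n : ℕ} (p : (Fin n → Fin 2) → ℝ) (hp : degreeOne 2 n ![k, n - k] p) :
    ∃ (c : ℝ) (a : Fin n → ℝ), ∀ β : Fin k ↪ Fin n, p (vec β) = c + ∑ i, a (β i) := by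
  obtain ⟨c, coef, hc⟩ := hp
  refine ⟨c + ∑ j, coef j 1, fun j => coef j 0 - coef j 1, ?_⟩
  intro β
  rw [hc _ (vec_mem β), add_assoc]
  congr 1
  have h1 : ∑ i, (coef (β i) 0 - coef (β i) 1)
      = ∑ j, if vec β j = 0 then coef j 0 - coef j 1 else 0 := by
    rw [← Finset.sum_filter, vec_zero_set, Finset.sum_map]
  rw [h1, ← Finset.sum_add_distrib]
  apply Finset.sum_congr rfl
  intro j _
  rw [Fin.sum_univ_two]
  have : vec β j = 0 ∨ vec β j = 1 := by omega
  rcases this with h | h <;> simp [xvar, h]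

lemma size_final {k n : ℕ} (hk : 2 ≤ k) (h : 2 * k ≤ n) (s : ℕ) (ε : ℝ) (hε : 0 ≤ ε)
    (hs : 2 ≤ s → ((k:ℝ) * s / n) ^ 2 ≤ 5000000 * ε) :
    (s : ℝ) ≤ max 1 (10 ^ 12 * Real.sqrt ε * ((n : ℝ) / (k : ℝ))) := by
  have hn : (0:ℝ) < n := by exact_mod_cast (show 0 < n by omega)
  have hk0 : (0:ℝ) < k := by exact_mod_cast (show 0 < k by omega)
  by_cases h2 : 2 ≤ s
  · apply le_max_of_le_right
    have h3 : ((k:ℝ) * s / n) ^ 2 ≤ (10 ^ 12 * Real.sqrt ε) ^ 2 := by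
      rw [mul_pow, Real.sq_sqrt hε]
      refine (hs h2).trans ?_
      norm_num
      linarith
    have h4 := le_of_sq_le_sq' h3 (by positivity)
    calc (s:ℝ) = (k * s / n) * (n / k) := by field_simp
      _ ≤ _ := by gcongr
  · apply le_max_of_le_left
    exact_mod_cast (show s ≤ 1 by omega)

lemma main_aux {k n : ℕ} (hk : 2 ≤ k) (h : 2 * k ≤ n) (f p : (Fin n → Fin 2) → ℝ)
    (hf : booleanOn 2 n ![k, n - k] f) (hp : degreeOne 2 n ![k, n - k] p) (ε : ℝ)
    (hε : msExp 2 n ![k, n - k] (fun u => (f u - p u) ^ 2) = ε) (hsmall : ε ≤ 1 / 10 ^ 12) :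
    ∃ S : Finset (Fin n), (S.card : ℝ) ≤ max 1 (10 ^ 12 * Real.sqrt ε * ((n : ℝ) / (k : ℝ))) ∧
      (msExp 2 n ![k, n - k]
          (fun u => (f u - if ∃ j ∈ S, u j = 0 then (1 : ℝ) else 0) ^ 2) ≤ 10 ^ 12 * ε ∨
        msExp 2 n ![k, n - k]
          (fun u => ((1 - f u) - if ∃ j ∈ S, u j = 0 then (1 : ℝ) else 0) ^ 2) ≤ 10 ^ 12 * ε) := by
  have hfb : ∀ β : Fin k ↪ Fin n, f (vec β) = 0 ∨ f (vec β) = 1 := fun β => hf _ (vec_mem β)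
  obtain ⟨c, a, hca⟩ := degree_one_form p hp
  obtain ⟨η, hη1, hη0, hηP, hηB⟩ := exists_eta h f p c a hfb hca
  rw [hε] at hη1
  have hε0 : 0 ≤ ε := hη1 ▸ pE_nonneg n η hη0
  obtain ⟨b, hb, ⟨hlow2, hlow4⟩, ⟨hhigh2, hhigh4⟩⟩ := center_bound hk h a η hηP
  rw [hη1] at hb
  -- the exceptional sets
  set P := Finset.univ.filter fun j => 1 / 2 ≤ a j - a b with hPdef
  set N := Finset.univ.filter fun j => a j - a b ≤ - (1 / 2) with hNdef
  have hPN : Disjoint P N := by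
    rw [Finset.disjoint_left]
    intro j h1 h2
    have h1 := (Finset.mem_filter.mp h1).2
    have h2 := (Finset.mem_filter.mp h2).2
    linarith
  have hPs : 2 ≤ P.card → ((k:ℝ) * P.card / n) ^ 2 ≤ 5000000 * ε := by
    intro h2
    rw [← hη1]
    refine hot_grow hk h a η hη0 hηB (by rw [hη1]; exact hsmall) P _ ?_ hlow2 hlow4 h2
    intro x hx y hy
    have h1 := (Finset.mem_filter.mp hx).2
    have h2 := (Finset.mem_filter.mp hy).2
    rw [le_abs]; left; linarith
  have hNs : 2 ≤ N.card → ((k:ℝ) * N.card / n) ^ 2 ≤ 5000000 * ε := by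
    intro h2
    rw [← hη1]
    refine hot_grow hk h a η hη0 hηB (by rw [hη1]; exact hsmall) N _ ?_ hhigh2 hhigh4 h2
    intro x hx y hy
    have h1 := (Finset.mem_filter.mp hx).2
    have h2 := (Finset.mem_filter.mp hy).2
    rw [le_abs]; right; linarith
  obtain ⟨hU, hsz⟩ := size_cond hk h P.card N.card ε hsmall hPs hNs
  let α : Fin k ↪ Fin n := cubeEmb h (fun _ => true)
  -- rounding error
  let e : Fin n → ℝ := fun j => a j - a b - (if j ∈ P then 1 else 0) + (if j ∈ N then 1 else 0)
  have he : ∀ j, e j ^ 2 ≤ Phi (a j - a b) := by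
    intro j
    simp only [e, hPdef, hNdef, Finset.mem_filter, Finset.mem_univ, true_and]
    generalize a j - a b = z
    unfold Phi
    by_cases h1 : 1 / 2 ≤ z
    · have h2 : ¬ z ≤ -(1 / 2) := by linarith
      rw [if_pos h1, if_neg h2, abs_of_nonneg (by linarith)]
      apply le_min <;> nlinarith
    · by_cases h2 : z ≤ -(1 / 2)
      · rw [if_neg h1, if_pos h2, abs_of_nonpos (by linarith)]
        apply le_min <;> nlinarith
      · rw [if_neg h1, if_neg h2]
        push Not at h1 h2
        apply le_min
        · nlinarith
        · rw [← sq_abs]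
          have : |z| < 1 / 2 := abs_lt.mpr ⟨h2, h1⟩
          rw [sub_zero, add_zero]
          nlinarith [abs_nonneg z]
  have hvar := pE_var (show 2 ≤ n by omega) α e
  have hvar2 : (k:ℝ) / n * ∑ j, e j ^ 2 ≤ 40000 * ε := by
    refine le_trans ?_ hb
    gcongr with j
    exact he j
  set μ : ℝ := c + k * a b + k * ((∑ j, e j) / n) with hμ
  have hcntsum : ∀ (Q : Finset (Fin n)) (β : Fin k ↪ Fin n),
      ∑ i, (if β i ∈ Q then (1:ℝ) else 0) = cnt Q β := by
    intro Q β
    rw [Finset.sum_boole]; rfl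
  have hpform : ∀ β : Fin k ↪ Fin n, p (vec β) - μ
      = (∑ i, e (β i) - k * ((∑ j, e j) / n)) + ((cnt P β : ℝ) - cnt N β) := by
    intro β
    rw [hca, ← hcntsum, ← hcntsum]
    have : ∀ j, a j = a b + e j + (if j ∈ P then 1 else 0) - (if j ∈ N then 1 else 0) := by
      intro j; simp only [e]; ring
    rw [Finset.sum_congr rfl (fun i _ => this (β i))]
    simp only [Finset.sum_add_distrib, Finset.sum_sub_distrib, Finset.sum_const, card_univ,
      Fintype.card_fin, nsmul_eq_mul]
    rw [hμ]
    ring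
  set m : ℤ := round μ with hmdef
  have hround : ∀ β : Fin k ↪ Fin n, (f (vec β) - ((cnt P β : ℝ) - cnt N β) - m) ^ 2
      ≤ 8 * (f (vec β) - p (vec β)) ^ 2
        + 8 * (∑ i, e (β i) - k * ((∑ j, e j) / n)) ^ 2 := by
    intro β
    have hzint : ∃ z : ℤ, f (vec β) - ((cnt P β : ℝ) - cnt N β) = z := by
      rcases hfb β with h1 | h1
      · exact ⟨0 - ((cnt P β : ℤ) - cnt N β), by rw [h1]; push_cast; ring⟩
      · exact ⟨1 - ((cnt P β : ℤ) - cnt N β), by rw [h1]; push_cast; ring⟩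
    obtain ⟨z, hz⟩ := hzint
    have hr := round_le μ z
    rw [← hmdef] at hr
    have e1 : (z:ℝ) - μ = (f (vec β) - p (vec β)) + (∑ i, e (β i) - k * ((∑ j, e j) / n)) := by
      rw [← hz]; linarith [hpform β]
    have e2 : |(z:ℝ) - m| ≤ 2 * |(z:ℝ) - μ| := by
      have := abs_sub_le (z:ℝ) μ m
      rw [abs_sub_comm μ (z:ℝ)] at hr
      linarith
    rw [hz]
    have e3 : ((z:ℝ) - m) ^ 2 ≤ 4 * ((z:ℝ) - μ) ^ 2 := by
      rw [← sq_abs, ← sq_abs ((z:ℝ) - μ)]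
      nlinarith [abs_nonneg ((z:ℝ) - m)]
    rw [e1] at e3
    nlinarith [sq_nonneg ((f (vec β) - p (vec β)) - (∑ i, e (β i) - k * ((∑ j, e j) / n)))]
  have hδ : pE n (fun π => (f (vec (π • α)) - ((cnt P (π • α) : ℝ) - cnt N (π • α)) - m) ^ 2)
      ≤ 400000 * ε := by
    refine (pE_mono n _ _ (fun π => hround (π • α))).trans ?_
    rw [pE_add, pE_const_mul, pE_const_mul, ← msExp_eq α (fun u => (f u - p u) ^ 2), hε]
    linarith
  -- the integer `m` is `0` or `1`
  have hm01 : m = 0 ∨ m = 1 := by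
    by_contra hm
    push Not at hm
    have hz := zero_prob hk h α (P ∪ N) (by rw [Finset.card_union_of_disjoint hPN]; exact hU)
    have hpt : ∀ π : Equiv.Perm (Fin n), (if cnt (P ∪ N) (π • α) = 0 then (1:ℝ) else 0)
        ≤ (f (vec (π • α)) - ((cnt P (π • α) : ℝ) - cnt N (π • α)) - m) ^ 2 := by
      intro π
      split_ifs with h0
      · rw [cnt_union P N hPN] at h0
        have h1 : cnt P (π • α) = 0 := by omega
        have h2 : cnt N (π • α) = 0 := by omega
        rw [h1, h2]
        have : ∀ z : ℤ, z ≠ 0 → (1:ℝ) ≤ (z:ℝ) ^ 2 := by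
          intro z hz
          have : 1 ≤ z ^ 2 := by
            have := sq_nonneg z
            have : z ^ 2 ≠ 0 := pow_ne_zero 2 hz
            omega
          exact_mod_cast this
        rcases hfb (π • α) with h3 | h3
        · rw [h3]
          have := this (0 - m) (by omega)
          push_cast at this ⊢
          linarith
        · rw [h3]
          have := this (1 - m) (by omega)
          push_cast at this ⊢
          linarith
      · positivity
    have := (hz.trans (pE_mono n _ _ hpt)).trans hδ
    norm_num at hsmall
    linarith
  rcases hm01 with hm | hm
  · refine ⟨P, size_final hk h _ ε hε0 hPs, Or.inl ?_⟩
    rw [msExp_eq α]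
    refine (final_step hk h α P N hPN hsz (fun β => f (vec β)) hfb (400000 * ε) ?_).trans ?_
    · rw [hm] at hδ
      simpa using hδ
    · norm_num; linarith
  · refine ⟨N, size_final hk h _ ε hε0 hNs, Or.inr ?_⟩
    rw [msExp_eq α]
    refine (final_step hk h α N P hPN.symm (by linarith) (fun β => 1 - f (vec β)) ?_
      (400000 * ε) ?_).trans ?_
    · intro β
      rcases hfb β with h1 | h1 <;> simp [h1]
    · rw [hm] at hδ
      refine le_trans (le_of_eq ?_) hδ
      congr 1
      funext π
      push_cast
      ring
    · norm_num; linarith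

/-- **FKN theorem for the slice** (Filmus).  If `f` is Boolean on the slice `M_{(k,n-k)}` with
`2 ≤ k ≤ n/2` and `‖f^{>1}‖² = ε` (expressed via the orthogonal projection `p = f^{≤1}` onto
the degree-one subspace), then `f` or `1 - f` is `Cε`-close to `max_{j ∈ S} x_{j1}` for some
set `S` of at most `max(1, C√ε·(n/k))` coordinates. -/
theorem fkn_slice : ∃ C : ℝ, ∀ n k : ℕ, 2 ≤ k → 2 * k ≤ n →
    ∀ f : (Fin n → Fin 2) → ℝ, booleanOn 2 n ![k, n - k] f →
    ∀ p : (Fin n → Fin 2) → ℝ, degreeOne 2 n ![k, n - k] p →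
    (∀ h : (Fin n → Fin 2) → ℝ, degreeOne 2 n ![k, n - k] h →
      msExp 2 n ![k, n - k] (fun u => (f u - p u) * h u) = 0) →
    ∀ ε : ℝ, msExp 2 n ![k, n - k] (fun u => (f u - p u) ^ 2) = ε →
    ∃ S : Finset (Fin n), (S.card : ℝ) ≤ max 1 (C * Real.sqrt ε * ((n : ℝ) / (k : ℝ))) ∧
      (msExp 2 n ![k, n - k]
          (fun u => (f u - if ∃ j ∈ S, u j = 0 then (1 : ℝ) else 0) ^ 2) ≤ C * ε ∨
        msExp 2 n ![k, n - k]
          (fun u => ((1 - f u) - if ∃ j ∈ S, u j = 0 then (1 : ℝ) else 0) ^ 2) ≤ C * ε) := by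
  refine ⟨10 ^ 12, ?_⟩
  intro n k hk h f hf p hp _ ε hε
  rcases le_or_gt ε (1 / 10 ^ 12) with hs | hs
  · exact main_aux hk h f p hf hp ε hε hs
  · refine ⟨∅, by simp, Or.inl ?_⟩
    rw [msExp_eq (cubeEmb h (fun _ => true))]
    refine (pE_mono n _ (fun _ => 1) ?_).trans ?_
    · intro π
      rcases hf _ (vec_mem (π • cubeEmb h (fun _ => true))) with h1 | h1 <;> simp [h1]
    · rw [pE_const]
      norm_num at hs ⊢
      linarith
end
end

section
/- Fix an integer ℓ ≥ 2 and a parameter ρ > 0. There exist constants N = N(ℓ,ρ), η = η(ℓ,ρ) > 0 and C = C(ℓ,ρ) such that the following holds for every ρ-balanced multislice M_κ on n ≥ N points and ℓ colours and every ε ≤ η. If f : M_κ → ℝ is a degree-one function which satisfies E[dist(f,{0,1})²] = ε and Inf_{j_1 j_2}[f] ≤ η for all coordinates j_1, j_2 ∈ [n], then there exists a constant c ∈ {0,1} such that E[(f−c)²] ≤ Cε and |E[f] − c| ≤ C√ε. -/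
open Finset

noncomputable section

/-- The influence `Inf_{j₁j₂}[f] = E[(f(u) - f(u^{(j₁ j₂)}))²]`. -/
def influence (ℓ n : ℕ) (κ : Fin ℓ → ℕ) (j₁ j₂ : Fin n) (f : (Fin n → Fin ℓ) → ℝ) : ℝ :=
  msExp ℓ n κ (fun u => (f u - f (u ∘ Equiv.swap j₁ j₂)) ^ 2)

namespace FKN
variable {α β : Type*} [Fintype α] [DecidableEq α]

theorem sum_inv (M : Finset (α → β)) (hM : ∀ u ∈ M, ∀ σ : Equiv.Perm α, u ∘ σ ∈ M)
    (σ : Equiv.Perm α) (F : (α → β) → ℝ) : ∑ u ∈ M, F (u ∘ σ) = ∑ u ∈ M, F u := by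
  refine Finset.sum_nbij' (fun u => u ∘ σ) (fun u => u ∘ σ.symm) ?_ ?_ ?_ ?_ ?_
  · intro u hu; exact hM u hu σ
  · intro u hu; exact hM u hu σ.symm
  · intro u _; funext x; simp
  · intro u _; funext x; simp
  · intro u _; rfl

/-- Permutations supported on `S`. -/
def PS (S : Finset α) : Finset (Equiv.Perm α) := univ.filter fun σ => ∀ x, x ∉ S → σ x = x

theorem mem_PS {S : Finset α} {σ : Equiv.Perm α} : σ ∈ PS S ↔ ∀ x, x ∉ S → σ x = x := by
  simp [PS]

theorem PS_inv {S : Finset α} {σ : Equiv.Perm α} (h : σ ∈ PS S) : σ⁻¹ ∈ PS S := by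
  rw [mem_PS] at *
  intro x hx
  rw [Equiv.Perm.inv_eq_iff_eq]
  exact (h x hx).symm

theorem PS_mul {S : Finset α} {σ τ : Equiv.Perm α} (h : σ ∈ PS S) (h' : τ ∈ PS S) :
    σ * τ ∈ PS S := by
  rw [mem_PS] at *
  intro x hx
  rw [Equiv.Perm.mul_apply, h' x hx, h x hx]

theorem PS_pos (S : Finset α) : (0 : ℝ) < ((PS S).card : ℝ) := by
  have : (1 : Equiv.Perm α) ∈ PS S := by simp [mem_PS]
  exact_mod_cast Finset.card_pos.mpr ⟨_, this⟩

theorem PS_mem_of_mem {S : Finset α} {σ : Equiv.Perm α} (h : σ ∈ PS S) {x : α} (hx : x ∈ S) :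
    σ x ∈ S := by
  by_contra hc
  have := mem_PS.1 h _ hc
  have := σ.injective this
  rw [this] at hc
  exact hc hx

theorem PS_mono {S T : Finset α} (h : S ⊆ T) : PS S ⊆ PS T := by
  intro σ hσ
  rw [mem_PS] at *
  intro x hx
  exact hσ x (fun h' => hx (h h'))

theorem swap_mem_PS {S : Finset α} {l j : α} (hl : l ∈ S) (hj : j ∈ S) :
    Equiv.swap l j ∈ PS S := by
  rw [mem_PS]
  intro x hx
  apply Equiv.swap_apply_of_ne_of_ne
  · rintro rfl; exact hx hl
  · rintro rfl; exact hx hj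

theorem PS_decomp (S : Finset α) (j : α) (hj : j ∈ S) (F : Equiv.Perm α → ℝ) :
    ∑ σ ∈ PS S, F σ = ∑ l ∈ S, ∑ σ ∈ PS (S.erase j), F (σ * Equiv.swap l j) := by
  rw [← Finset.sum_product' (s := S) (t := PS (S.erase j))
    (f := fun l σ => F (σ * Equiv.swap l j))]
  symm
  refine Finset.sum_nbij' (fun p => p.2 * Equiv.swap p.1 j)
    (fun τ => (τ⁻¹ j, τ * Equiv.swap (τ⁻¹ j) j)) ?_ ?_ ?_ ?_ ?_
  · rintro ⟨l, σ⟩ h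
    rw [Finset.mem_product] at h
    exact PS_mul (PS_mono (Finset.erase_subset _ _) h.2) (swap_mem_PS h.1 hj)
  · intro τ h
    have h1 : τ⁻¹ j ∈ S := PS_mem_of_mem (PS_inv h) hj
    rw [Finset.mem_product]
    refine ⟨h1, ?_⟩
    have h2 := PS_mul h (swap_mem_PS h1 hj)
    rw [mem_PS] at h2 ⊢
    intro x hx
    by_cases hxj : x = j
    · subst hxj; simp
    · apply h2
      intro hxS
      exact hx (Finset.mem_erase.2 ⟨hxj, hxS⟩)
  · rintro ⟨l, σ⟩ h
    rw [Finset.mem_product] at h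
    have h2 : σ⁻¹ j = j := mem_PS.1 (PS_inv h.2) j (by simp)
    have h3 : (σ * Equiv.swap l j)⁻¹ j = l := by
      rw [mul_inv_rev, Equiv.Perm.mul_apply, h2]; simp
    simp only [h3]
    simp [mul_assoc]
  · intro τ h
    simp [mul_assoc]
  · intro p h
    rfl

/-- Averaging over the permutations supported on `S`. -/
def Av (S : Finset α) (g : (α → β) → ℝ) (u : α → β) : ℝ :=
  (∑ σ ∈ PS S, g (u ∘ σ)) / ((PS S).card : ℝ)

theorem Av_inv (S : Finset α) (g : (α → β) → ℝ) (u : α → β) (τ : Equiv.Perm α) (h : τ ∈ PS S) :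
    Av S g (u ∘ τ) = Av S g u := by
  unfold Av
  congr 1
  refine Finset.sum_nbij' (fun σ => τ * σ) (fun σ => τ⁻¹ * σ) ?_ ?_ ?_ ?_ ?_
  · intro σ hσ; exact PS_mul h hσ
  · intro σ hσ; exact PS_mul (PS_inv h) hσ
  · intro σ _; simp
  · intro σ _; simp
  · intro σ _; rfl

theorem Av_orth (M : Finset (α → β)) (hM : ∀ u ∈ M, ∀ σ : Equiv.Perm α, u ∘ σ ∈ M)
    (S : Finset α) (g h : (α → β) → ℝ) (hh : ∀ σ ∈ PS S, ∀ u, h (u ∘ σ) = h u) :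
    ∑ u ∈ M, (g u - Av S g u) * h u = 0 := by
  have key : ∑ u ∈ M, Av S g u * h u = ∑ u ∈ M, g u * h u := by
    unfold Av
    simp_rw [div_mul_eq_mul_div]
    rw [← Finset.sum_div, div_eq_iff (PS_pos S).ne']
    simp_rw [Finset.sum_mul]
    rw [Finset.sum_comm]
    have : ∀ σ ∈ PS S, ∑ u ∈ M, g (u ∘ σ) * h u = ∑ u ∈ M, g u * h u := by
      intro σ hσ
      rw [← sum_inv M hM σ (fun u => g u * h u)]
      exact Finset.sum_congr rfl fun u _ => by rw [hh σ hσ]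
    rw [Finset.sum_congr rfl this, Finset.sum_const, nsmul_eq_mul, ← Finset.sum_mul]
    ring
  simp_rw [sub_mul]
  rw [Finset.sum_sub_distrib, key, sub_self]

theorem Av_contr (M : Finset (α → β)) (hM : ∀ u ∈ M, ∀ σ : Equiv.Perm α, u ∘ σ ∈ M)
    (S : Finset α) (g : (α → β) → ℝ) :
    ∑ u ∈ M, Av S g u ^ 2 ≤ ∑ u ∈ M, g u ^ 2 := by
  have h1 := Av_orth M hM S g (Av S g) (fun σ hσ u => Av_inv S g u σ hσ)
  have h2 : ∑ u ∈ M, g u ^ 2 = ∑ u ∈ M, (g u - Av S g u) ^ 2 + ∑ u ∈ M, Av S g u ^ 2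
      + 2 * ∑ u ∈ M, (g u - Av S g u) * Av S g u := by
    rw [Finset.mul_sum, ← Finset.sum_add_distrib, ← Finset.sum_add_distrib]
    exact Finset.sum_congr rfl fun u _ => by ring
  have h3 : 0 ≤ ∑ u ∈ M, (g u - Av S g u) ^ 2 := Finset.sum_nonneg fun u _ => sq_nonneg _
  linarith

theorem PS_card (S : Finset α) (j : α) (hj : j ∈ S) :
    ((PS S).card : ℝ) = S.card * ((PS (S.erase j)).card : ℝ) := by
  have := PS_decomp S j hj (fun _ => 1)
  simpa using this

theorem Av_step (S : Finset α) (j : α) (hj : j ∈ S) (g : (α → β) → ℝ) (u : α → β) :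
    Av (S.erase j) g u - Av S g u
      = Av (S.erase j) (fun v => (∑ l ∈ S, (g v - g (v ∘ Equiv.swap l j))) / (S.card : ℝ)) u := by
  have hs : (S.card : ℝ) ≠ 0 := by
    exact_mod_cast (Finset.card_pos.mpr ⟨j, hj⟩).ne'
  have hp := (PS_pos (S.erase j)).ne'
  unfold Av
  rw [PS_card S j hj, PS_decomp S j hj, ← Finset.sum_div]
  have : ∑ σ ∈ PS (S.erase j), ∑ l ∈ S, (g (u ∘ σ) - g ((u ∘ σ) ∘ Equiv.swap l j))
      = S.card * ∑ σ ∈ PS (S.erase j), g (u ∘ σ)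
        - ∑ l ∈ S, ∑ σ ∈ PS (S.erase j), g (u ∘ (σ * Equiv.swap l j)) := by
    rw [Finset.sum_comm (s := S)]
    rw [Finset.mul_sum, ← Finset.sum_sub_distrib]
    refine Finset.sum_congr rfl fun σ _ => ?_
    rw [Finset.sum_sub_distrib, Finset.sum_const, nsmul_eq_mul]
    rfl
  rw [this]
  field_simp

/-- Unnormalised influence. -/
def Inf (M : Finset (α → β)) (g : (α → β) → ℝ) (l j : α) : ℝ :=
  ∑ u ∈ M, (g u - g (u ∘ Equiv.swap l j)) ^ 2

theorem D_step (M : Finset (α → β)) (hM : ∀ u ∈ M, ∀ σ : Equiv.Perm α, u ∘ σ ∈ M)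
    (S : Finset α) (j : α) (hj : j ∈ S) (g : (α → β) → ℝ) :
    ∑ u ∈ M, (g u - Av S g u) ^ 2 ≤ ∑ u ∈ M, (g u - Av (S.erase j) g u) ^ 2
      + (∑ l ∈ S, Inf M g l j) / S.card := by
  have hs : (0 : ℝ) < (S.card : ℝ) := by
    exact_mod_cast (Finset.card_pos.mpr ⟨j, hj⟩)
  have h1 := Av_orth M hM (S.erase j) g (fun u => Av (S.erase j) g u - Av S g u)
    (fun σ hσ u => by
      rw [Av_inv _ _ _ _ hσ, Av_inv _ _ _ _ (PS_mono (Finset.erase_subset _ _) hσ)])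
  have h2 : ∑ u ∈ M, (g u - Av S g u) ^ 2 = ∑ u ∈ M, (g u - Av (S.erase j) g u) ^ 2
      + ∑ u ∈ M, (Av (S.erase j) g u - Av S g u) ^ 2
      + 2 * ∑ u ∈ M, (g u - Av (S.erase j) g u) * (Av (S.erase j) g u - Av S g u) := by
    rw [Finset.mul_sum, ← Finset.sum_add_distrib, ← Finset.sum_add_distrib]
    exact Finset.sum_congr rfl fun u _ => by ring
  have h3 : ∑ u ∈ M, (Av (S.erase j) g u - Av S g u) ^ 2 ≤ (∑ l ∈ S, Inf M g l j) / S.card := by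
    simp_rw [Av_step S j hj g]
    refine (Av_contr M hM _ _).trans ?_
    unfold Inf
    rw [Finset.sum_comm, Finset.sum_div]
    refine Finset.sum_le_sum fun u _ => ?_
    rw [div_pow, div_le_div_iff₀ (by positivity) hs]
    have := sq_sum_le_card_mul_sum_sq (s := S) (f := fun l => g u - g (u ∘ Equiv.swap l j))
    nlinarith
  linarith

theorem D_bound (M : Finset (α → β)) (hM : ∀ u ∈ M, ∀ σ : Equiv.Perm α, u ∘ σ ∈ M)
    (g : (α → β) → ℝ) (s : ℕ) : ∀ S : Finset α, S.card = s + 1 →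
    (s + 1 : ℝ) * ∑ u ∈ M, (g u - Av S g u) ^ 2 ≤ ∑ l ∈ S, ∑ j ∈ S, Inf M g l j := by
  induction s with
  | zero =>
    intro S hS
    obtain ⟨j, rfl⟩ := Finset.card_eq_one.1 (by simpa using hS)
    have hP : PS ({j} : Finset α) = {1} := by
      ext σ
      rw [mem_PS, Finset.mem_singleton]
      constructor
      · intro h
        ext x
        by_cases hx : x = j
        · have h' := PS_mem_of_mem (mem_PS.2 h) (Finset.mem_singleton_self j)
          rw [Finset.mem_singleton] at h'
          rw [hx, h']; rfl
        · exact h x (by simpa using hx)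
      · rintro rfl x _; rfl
    have : ∀ u, Av ({j} : Finset α) g u = g u := by
      intro u; unfold Av; rw [hP]; simp
    simp_rw [this]
    simp [Inf]
  | succ s ih =>
    intro S hS
    have hI0 : ∀ j, Inf M g j j = 0 := by intro j; simp [Inf]
    have hIn : ∀ l j, 0 ≤ Inf M g l j := fun l j => Finset.sum_nonneg fun u _ => sq_nonneg _
    set D := ∑ u ∈ M, (g u - Av S g u) ^ 2 with hD
    set I := ∑ l ∈ S, ∑ j ∈ S, Inf M g l j with hI
    have hIS : 0 ≤ I := Finset.sum_nonneg fun l _ => Finset.sum_nonneg fun j _ => hIn l j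
    have hsym : ∀ l j, Inf M g l j = Inf M g j l := by
      intro l j; unfold Inf; simp_rw [Equiv.swap_comm l j]
    have hc : (S.card : ℝ) = s + 2 := by rw [hS]; push_cast; ring
    have h1 : ∀ j ∈ S, (s + 1 : ℝ) * D ≤ ∑ l ∈ S.erase j, ∑ k ∈ S.erase j, Inf M g l k
        + (s + 1) * ((∑ l ∈ S, Inf M g l j) / (s + 2)) := by
      intro j hj
      have a := D_step M hM S j hj g
      have b := ih (S.erase j) (by rw [Finset.card_erase_of_mem hj, hS]; rfl)
      rw [hc] at a
      have : (0 : ℝ) < s + 1 := by positivity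
      nlinarith
    have h2 : ∀ j ∈ S, ∑ l ∈ S.erase j, ∑ k ∈ S.erase j, Inf M g l k
        = I - 2 * ∑ l ∈ S, Inf M g l j := by
      intro j hj
      have e1 : ∀ F : α → ℝ, ∑ l ∈ S.erase j, F l = ∑ l ∈ S, F l - F j := by
        intro F; rw [← Finset.sum_erase_add S F hj]; ring
      simp_rw [e1]
      rw [Finset.sum_sub_distrib, hI0]
      have : ∑ k ∈ S, Inf M g j k = ∑ k ∈ S, Inf M g k j :=
        Finset.sum_congr rfl fun k _ => hsym _ _
      rw [this]; ring
    have h3 := Finset.sum_le_sum h1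
    rw [Finset.sum_const, nsmul_eq_mul, hc, Finset.sum_add_distrib, Finset.sum_congr rfl h2,
      Finset.sum_sub_distrib, Finset.sum_const, nsmul_eq_mul, hc, ← Finset.mul_sum,
      ← Finset.mul_sum, ← Finset.sum_div, Finset.sum_comm, ← hI] at h3
    push_cast
    have hs0 : (0 : ℝ) ≤ s := by positivity
    have h4 : (s + 1 : ℝ) * (I / (s + 2)) * (s + 2) = (s + 1) * I := by field_simp
    have h5 : (s + 2 : ℝ) * ((s + 1) * D) ≤ (s + 1) * I := by
      have : (s + 1 : ℝ) * (I / (s + 2)) ≤ I := by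
        rw [mul_div_assoc', div_le_iff₀ (by positivity)]; nlinarith
      nlinarith
    have h6 : (s + 1 : ℝ) * ((s + 2) * D) ≤ (s + 1) * I := by linarith
    have := le_of_mul_le_mul_left h6 (by positivity)
    linarith

/-- Poincaré inequality. -/
theorem poincare (M : Finset (α → β)) (hM : ∀ u ∈ M, ∀ σ : Equiv.Perm α, u ∘ σ ∈ M)
    (htr : ∀ u ∈ M, ∀ v ∈ M, ∃ σ : Equiv.Perm α, v = u ∘ σ) [Nonempty α] (hne : M.Nonempty)
    (g : (α → β) → ℝ) :
    ∃ m : ℝ, (Fintype.card α : ℝ) * ∑ u ∈ M, (g u - m) ^ 2 ≤ ∑ l, ∑ j, Inf M g l j := by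
  obtain ⟨u₀, hu₀⟩ := hne
  refine ⟨Av univ g u₀, ?_⟩
  have h := D_bound M hM g (Fintype.card α - 1) univ (by
    have := Fintype.card_pos (α := α)
    rw [Finset.card_univ]; omega)
  have e : ((Fintype.card α - 1 : ℕ) : ℝ) + 1 = Fintype.card α := by
    have := Fintype.card_pos (α := α)
    exact_mod_cast Nat.sub_add_cancel this
  rw [e] at h
  have : ∀ u ∈ M, Av univ g u = Av univ g u₀ := by
    intro u hu
    obtain ⟨σ, rfl⟩ := htr u₀ hu₀ u hu
    exact Av_inv _ _ _ _ (by simp [mem_PS])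
  rw [Finset.sum_congr rfl fun u hu => by rw [this u hu]] at h
  exact h
end FKN

namespace FKN

theorem ms_inv {ℓ n : ℕ} {κ : Fin ℓ → ℕ} : ∀ u ∈ multislice ℓ n κ, ∀ σ : Equiv.Perm (Fin n),
    u ∘ σ ∈ multislice ℓ n κ := by
  intro u hu σ
  simp only [multislice, Finset.mem_filter, Finset.mem_univ, true_and] at hu ⊢
  intro i
  rw [← hu i]
  refine Finset.card_nbij' (fun j => σ j) (fun j => σ.symm j) ?_ ?_ ?_ ?_ <;> intro j <;> simp

theorem ms_trans {ℓ n : ℕ} {κ : Fin ℓ → ℕ} : ∀ u ∈ multislice ℓ n κ, ∀ v ∈ multislice ℓ n κ,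
    ∃ σ : Equiv.Perm (Fin n), v = u ∘ σ := by
  intro u hu v hv
  simp only [multislice, Finset.mem_filter, Finset.mem_univ, true_and] at hu hv
  have e : ∀ i, Nonempty ({j // v j = i} ≃ {j // u j = i}) := by
    intro i
    apply Fintype.card_eq.1
    rw [Fintype.card_subtype, Fintype.card_subtype, hu, hv]
  refine ⟨Equiv.ofFiberEquiv (fun i => (e i).some), ?_⟩
  funext j
  exact (Equiv.ofFiberEquiv_map (fun i => (e i).some) j).symm

theorem exists_perm {n : ℕ} (j k j' k' : Fin n) (h : j ≠ k) (h' : j' ≠ k') :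
    ∃ σ : Equiv.Perm (Fin n), σ j' = j ∧ σ k' = k := by
  have hk : Equiv.swap j' j k' ≠ j := by
    intro hc
    apply h'
    apply (Equiv.swap j' j).injective
    rw [hc, Equiv.swap_apply_left]
  refine ⟨Equiv.swap (Equiv.swap j' j k') k * Equiv.swap j' j, ?_, ?_⟩
  · rw [Equiv.Perm.mul_apply, Equiv.swap_apply_left]
    exact Equiv.swap_apply_of_ne_of_ne hk.symm h
  · rw [Equiv.Perm.mul_apply, Equiv.swap_apply_left]

/-- Two-point marginals of the multislice are bounded below. -/
theorem marginal {ℓ n : ℕ} {κ : Fin ℓ → ℕ} {ρ : ℝ} (hρ : 0 < ρ)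
    (hκ : ∀ i, ρ * n ≤ (κ i : ℝ)) (j k : Fin n) (hjk : j ≠ k) (i i' : Fin ℓ) (hi : i ≠ i') :
    ρ ^ 2 * ((multislice ℓ n κ).card : ℝ)
      ≤ ∑ u ∈ multislice ℓ n κ, (if u j = i then (1 : ℝ) else 0) * (if u k = i' then 1 else 0) := by
  set M := multislice ℓ n κ with hM
  have hn : (0 : ℝ) < n := by
    have := j.pos
    exact_mod_cast this
  set c := ∑ u ∈ M, (if u j = i then (1 : ℝ) else 0) * (if u k = i' then 1 else 0) with hc
  have hc0 : 0 ≤ c := Finset.sum_nonneg fun u _ => by positivity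
  have h1 : ∀ j' k' : Fin n,
      ∑ u ∈ M, (if u j' = i then (1 : ℝ) else 0) * (if u k' = i' then 1 else 0) ≤ c := by
    intro j' k'
    by_cases h' : j' = k'
    · subst h'
      refine le_trans (le_of_eq ?_) hc0
      apply Finset.sum_eq_zero
      intro u _
      by_cases hu : u j' = i
      · have : u j' ≠ i' := hu ▸ hi
        simp [this]
      · simp [hu]
    · obtain ⟨σ, h3, h4⟩ := exists_perm j' k' j k h' hjk
      rw [hc, ← sum_inv M ms_inv σ
        (fun u => (if u j = i then (1 : ℝ) else 0) * (if u k = i' then 1 else 0))]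
      simp [h3, h4]
  have h2 : ∑ j' : Fin n, ∑ k' : Fin n, ∑ u ∈ M,
      (if u j' = i then (1 : ℝ) else 0) * (if u k' = i' then 1 else 0) = M.card * (κ i * κ i') := by
    rw [Finset.sum_congr rfl fun j' _ => Finset.sum_comm, Finset.sum_comm]
    rw [← nsmul_eq_mul, ← Finset.sum_const]
    refine Finset.sum_congr rfl fun u hu => ?_
    rw [← Finset.sum_mul_sum]
    simp only [hM, multislice, Finset.mem_filter, Finset.mem_univ, true_and] at hu
    rw [← hu i, ← hu i']
    simp
  have h3 : ∑ j' : Fin n, ∑ k' : Fin n, ∑ u ∈ M,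
      (if u j' = i then (1 : ℝ) else 0) * (if u k' = i' then 1 else 0)
      ≤ ∑ j' : Fin n, ∑ k' : Fin n, c :=
    Finset.sum_le_sum fun j' _ => Finset.sum_le_sum fun k' _ => h1 j' k'
  rw [h2] at h3
  simp only [Finset.sum_const, Finset.card_univ, Fintype.card_fin, nsmul_eq_mul] at h3
  have h4 : (ρ * n) * (ρ * n) ≤ (κ i : ℝ) * κ i' :=
    mul_le_mul (hκ i) (hκ i') (by positivity) (by positivity)
  have h5 : (M.card : ℝ) * ((ρ * n) * (ρ * n)) ≤ M.card * (κ i * κ i') :=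
    mul_le_mul_of_nonneg_left h4 (by positivity)
  have h6 : (n * n : ℝ) * (ρ ^ 2 * M.card) ≤ (n * n) * c := by nlinarith
  exact le_of_mul_le_mul_left h6 (by positivity)

theorem swap_diff {ℓ n : ℕ} (a : Fin n → Fin ℓ → ℝ) (u : Fin n → Fin ℓ) (j k : Fin n) :
    ∑ m, a m (u m) - ∑ m, a m ((u ∘ Equiv.swap j k) m)
      = a j (u j) + a k (u k) - a j (u k) - a k (u j) := by
  by_cases h : j = k
  · subst h; simp
  rw [← Finset.sum_sub_distrib, Finset.sum_eq_add j k h]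
  · simp; ring
  · intro m _ hm
    simp [Equiv.swap_apply_of_ne_of_ne hm.1 hm.2]
  · simp
  · simp

/-- Degree-one functions in additive form. -/
theorem deg_form {ℓ n : ℕ} {κ : Fin ℓ → ℕ} {f : (Fin n → Fin ℓ) → ℝ} (hf : degreeOne ℓ n κ f) :
    ∃ (c : ℝ) (a : Fin n → Fin ℓ → ℝ), ∀ u ∈ multislice ℓ n κ, f u = c + ∑ j, a j (u j) := by
  obtain ⟨c, a, h⟩ := hf
  refine ⟨c, a, fun u hu => ?_⟩
  rw [h u hu]
  simp [xvar]

theorem diff_form {ℓ n : ℕ} {κ : Fin ℓ → ℕ} {f : (Fin n → Fin ℓ) → ℝ} {c : ℝ}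
    {a : Fin n → Fin ℓ → ℝ} (h : ∀ u ∈ multislice ℓ n κ, f u = c + ∑ j, a j (u j))
    (u : Fin n → Fin ℓ) (hu : u ∈ multislice ℓ n κ) (j k : Fin n) :
    f u - f (u ∘ Equiv.swap j k) = a j (u j) + a k (u k) - a j (u k) - a k (u j) := by
  rw [h u hu, h _ (ms_inv u hu _), ← swap_diff]
  ring

/-- Differences along a swap are bounded pointwise by the influence. -/
theorem pointwise {ℓ n : ℕ} {κ : Fin ℓ → ℕ} {f : (Fin n → Fin ℓ) → ℝ} {ρ : ℝ} (hρ : 0 < ρ)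
    (hκ : ∀ i, ρ * n ≤ (κ i : ℝ)) (hf : degreeOne ℓ n κ f)
    (u : Fin n → Fin ℓ) (hu : u ∈ multislice ℓ n κ) (j k : Fin n) :
    ρ ^ 2 * ((multislice ℓ n κ).card : ℝ) * (f u - f (u ∘ Equiv.swap j k)) ^ 2
      ≤ Inf (multislice ℓ n κ) f j k := by
  obtain ⟨c, a, h⟩ := deg_form hf
  have hpos : 0 ≤ Inf (multislice ℓ n κ) f j k := Finset.sum_nonneg fun u _ => sq_nonneg _
  by_cases hi : u j = u k
  · rw [diff_form h u hu, hi]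
    ring_nf
    exact hpos
  have hjk : j ≠ k := fun hh => hi (by rw [hh])
  have h1 := marginal hρ hκ j k hjk (u j) (u k) hi
  refine (mul_le_mul_of_nonneg_right h1 (sq_nonneg _)).trans ?_
  unfold Inf
  rw [Finset.sum_mul]
  refine Finset.sum_le_sum fun v hv => ?_
  rw [diff_form h u hu, diff_form h v hv]
  by_cases e1 : v j = u j
  · by_cases e2 : v k = u k
    · simp [e1, e2]
    · simp only [e2, if_false]; nlinarith [sq_nonneg (a j (v j) + a k (v k) - a j (v k) - a k (v j))]
  · simp only [e1, if_false]; nlinarith [sq_nonneg (a j (v j) + a k (v k) - a j (v k) - a k (v j))]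

/-- Total influence of a degree-one function. -/
theorem total_inf {ℓ n : ℕ} {κ : Fin ℓ → ℕ} {f : (Fin n → Fin ℓ) → ℝ}
    (hf : degreeOne ℓ n κ f) (hn : 0 < n) :
    ∑ j, ∑ k, Inf (multislice ℓ n κ) f j k ≤ 4 * n * ∑ u ∈ multislice ℓ n κ, f u ^ 2 := by
  obtain ⟨c, a, h⟩ := deg_form hf
  set M := multislice ℓ n κ with hM
  have hlap : ∃ q : ℝ, ∀ u ∈ M, ∑ j, ∑ k, (f u - f (u ∘ Equiv.swap j k)) = 2 * n * f u - q := by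
    refine ⟨2 * n * c + 2 * ∑ j, ∑ i, κ i * a j i, fun u hu => ?_⟩
    have e1 : ∀ j, ∑ k, a j (u k) = ∑ i, κ i * a j i := by
      intro j
      have hu' := hu
      simp only [hM, multislice, Finset.mem_filter, Finset.mem_univ, true_and] at hu'
      rw [← Finset.sum_fiberwise (s := univ) (g := u)]
      refine Finset.sum_congr rfl fun i _ => ?_
      rw [← hu' i, ← nsmul_eq_mul, ← Finset.sum_const]
      refine Finset.sum_congr rfl fun k hk => ?_
      rw [(Finset.mem_filter.1 hk).2]
    simp_rw [diff_form h u hu]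
    simp only [Finset.sum_sub_distrib, Finset.sum_add_distrib, Finset.sum_const, Finset.card_univ,
      Fintype.card_fin, nsmul_eq_mul]
    rw [Finset.sum_comm (f := fun j k => a k (u j))]
    simp_rw [e1]
    rw [← Finset.mul_sum, h u hu]
    ring
  obtain ⟨q, hq⟩ := hlap
  have hflip : ∀ j k, Inf M f j k = 2 * ∑ u ∈ M, f u * (f u - f (u ∘ Equiv.swap j k)) := by
    intro j k
    have e := sum_inv M ms_inv (Equiv.swap j k) (fun u => f u ^ 2)
    unfold Inf
    have e2 : ∑ u ∈ M, (f u - f (u ∘ Equiv.swap j k)) ^ 2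
      = 2 * ∑ u ∈ M, f u * (f u - f (u ∘ Equiv.swap j k))
        + (∑ u ∈ M, f (u ∘ Equiv.swap j k) ^ 2 - ∑ u ∈ M, f u ^ 2) := by
      rw [Finset.mul_sum, ← Finset.sum_sub_distrib, ← Finset.sum_add_distrib]
      exact Finset.sum_congr rfl fun u _ => by ring
    rw [e2, e]; ring
  have hsum : ∑ j, ∑ k, Inf M f j k = 4 * n * ∑ u ∈ M, f u ^ 2 - 2 * (q * ∑ u ∈ M, f u) := by
    simp_rw [hflip, ← Finset.mul_sum]
    rw [Finset.sum_congr rfl fun j _ => Finset.sum_comm, Finset.sum_comm]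
    have : ∀ u ∈ M, ∑ j, ∑ k, f u * (f u - f (u ∘ Equiv.swap j k)) = 2 * n * f u ^ 2 - q * f u := by
      intro u hu
      simp_rw [← Finset.mul_sum]
      rw [hq u hu]; ring
    rw [Finset.sum_congr rfl this, Finset.sum_sub_distrib, ← Finset.mul_sum, ← Finset.mul_sum]
    ring
  have hz : 2 * n * ∑ u ∈ M, f u = q * M.card := by
    have e1 : ∑ u ∈ M, ∑ j, ∑ k, (f u - f (u ∘ Equiv.swap j k)) = 0 := by
      rw [Finset.sum_comm]
      refine Finset.sum_eq_zero fun j _ => ?_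
      rw [Finset.sum_comm]
      refine Finset.sum_eq_zero fun k _ => ?_
      rw [Finset.sum_sub_distrib, sum_inv M ms_inv, sub_self]
    rw [Finset.sum_congr rfl hq, Finset.sum_sub_distrib, ← Finset.mul_sum, Finset.sum_const,
      nsmul_eq_mul] at e1
    linarith
  have hn' : (0 : ℝ) < n := by exact_mod_cast hn
  have : 0 ≤ q * ∑ u ∈ M, f u := by
    have h1 : (2 * n : ℝ) * (q * ∑ u ∈ M, f u) = q ^ 2 * M.card := by
      linear_combination q * hz
    have h2 : (0 : ℝ) ≤ q ^ 2 * M.card := by positivity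
    by_contra hneg
    push Not at hneg
    nlinarith
  rw [hsum]; linarith

/-- A 2-Lipschitz rounding function. -/
def psi (t : ℝ) : ℝ := max 0 (min 1 (2 * t - 1 / 2))

theorem psi_lip (s t : ℝ) : (psi s - psi t) ^ 2 ≤ 4 * (s - t) ^ 2 := by
  have : |psi s - psi t| ≤ |2 * (s - t)| := by
    unfold psi
    rcases le_total 0 (2 * (s - t)) with h | h
    · rw [abs_of_nonneg h, abs_le]
      constructor <;> grind
    · rw [abs_of_nonpos h, abs_le]
      constructor <;> grind
  have := sq_le_sq.2 this
  nlinarith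

theorem psi_close (t : ℝ) : |t - psi t| ≤ dist01 t := by
  unfold psi dist01
  rw [abs_le]
  constructor <;> grind

theorem dist01_nonneg (t : ℝ) : 0 ≤ dist01 t := le_min (abs_nonneg _) (abs_nonneg _)

theorem psi_key (s t B : ℝ) (h1 : |s - t| ≤ 1 / 8) (h2 : (s - t) ^ 2 ≤ B) :
    (psi s - psi t) ^ 2 ≤ 256 * B * dist01 s ^ 2 := by
  have hB : 0 ≤ B := (sq_nonneg _).trans h2
  by_cases hd : 1 / 8 ≤ dist01 s
  · have e : 1 ≤ 64 * dist01 s ^ 2 := by nlinarith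
    have := psi_lip s t
    nlinarith [mul_le_mul_of_nonneg_left e hB]
  · have : psi s = psi t := by
      unfold psi; unfold dist01 at hd
      rw [abs_le] at h1
      grind
    rw [this, sub_self, zero_pow two_ne_zero]
    positivity

theorem dist01_lip (s t : ℝ) : dist01 t ≤ dist01 s + |s - t| := by
  unfold dist01
  grind

theorem dist01_le (t : ℝ) : t ^ 2 ≤ 2 * dist01 t ^ 2 + 2 := by
  have h0 := dist01_nonneg t
  have : |t| ≤ dist01 t + 1 := by unfold dist01; grind
  have h1 : t ^ 2 ≤ (dist01 t + 1) ^ 2 := by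
    rw [← sq_abs t]
    exact pow_le_pow_left₀ (abs_nonneg _) this 2
  nlinarith [sq_nonneg (dist01 t - 1)]

theorem exists_c (m : ℝ) : ∃ c : ℝ, (c = 0 ∨ c = 1) ∧ (m - c) ^ 2 = dist01 m ^ 2 := by
  unfold dist01
  rcases le_total |m| |m - 1| with h | h
  · exact ⟨0, Or.inl rfl, by rw [min_eq_left h, sq_abs, sub_zero]⟩
  · exact ⟨1, Or.inr rfl, by rw [min_eq_right h, sq_abs]⟩

end FKN

/-- If a degree-one function on a `ρ`-balanced multislice is `ε`-close to Boolean and all its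
pairwise influences are small, then it is close to a constant in `{0,1}`. -/
theorem fkn_multislice_low_influence (ℓ : ℕ) (hℓ : 2 ≤ ℓ) (ρ : ℝ) (hρ : 0 < ρ) :
    ∃ (N : ℕ) (η C : ℝ), 0 < η ∧ ∀ n : ℕ, N ≤ n → ∀ κ : Fin ℓ → ℕ,
      (∀ i, 0 < κ i) → (∀ i, ρ * n ≤ (κ i : ℝ)) → (∑ i, κ i = n) →
      ∀ ε : ℝ, ε ≤ η →
      ∀ f : (Fin n → Fin ℓ) → ℝ, degreeOne ℓ n κ f →
      msExp ℓ n κ (fun u => dist01 (f u) ^ 2) = ε →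
      (∀ j₁ j₂ : Fin n, influence ℓ n κ j₁ j₂ f ≤ η) →
      ∃ c : ℝ, (c = 0 ∨ c = 1) ∧
        msExp ℓ n κ (fun u => (f u - c) ^ 2) ≤ C * ε ∧
        |msExp ℓ n κ f - c| ≤ C * Real.sqrt ε := by
  set K : ℝ := 4096 / ρ ^ 2 with hK
  have hρ2 : 0 < ρ ^ 2 := by positivity
  have hK0 : 0 ≤ K := by positivity
  refine ⟨0, min 1 (ρ ^ 2 / 64), 16 + 12 * K, by positivity, ?_⟩
  intro n _ κ hκ0 hκ hκn ε hε f hf hdist hinf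
  set M := multislice ℓ n κ with hM
  rcases M.eq_empty_or_nonempty with hemp | hne
  · have h0 : ∀ F, msExp ℓ n κ F = 0 := by
      intro F; unfold msExp; rw [← hM, hemp]; simp
    rw [h0] at hdist
    refine ⟨0, Or.inl rfl, ?_, ?_⟩
    · rw [h0, ← hdist]; simp
    · rw [h0, ← hdist]; simp
  have hZ : (0 : ℝ) < M.card := by exact_mod_cast Finset.card_pos.2 hne
  set Z : ℝ := (M.card : ℝ) with hZdef
  have hE : ∀ F : (Fin n → Fin ℓ) → ℝ, ∑ u ∈ M, F u = Z * msExp ℓ n κ F := by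
    intro F; unfold msExp; rw [← hM, ← hZdef]; field_simp
  have hn : 0 < n := by
    rw [← hκn]
    exact lt_of_lt_of_le (hκ0 ⟨0, by omega⟩)
      (Finset.single_le_sum (f := κ) (fun i _ => Nat.zero_le _) (Finset.mem_univ _))
  have hn' : (0 : ℝ) < n := by exact_mod_cast hn
  have hd : ∑ u ∈ M, dist01 (f u) ^ 2 = Z * ε := by rw [hE, hdist]
  have hε0 : 0 ≤ ε := by
    have : 0 ≤ Z * ε := by rw [← hd]; exact Finset.sum_nonneg fun u _ => sq_nonneg _
    exact nonneg_of_mul_nonneg_right this hZ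
  have hε1 : ε ≤ 1 := hε.trans (min_le_left _ _)
  have hInfE : ∀ j k, FKN.Inf M f j k ≤ Z * (ρ ^ 2 / 64) := by
    intro j k
    have h1 := (hinf j k).trans (min_le_right _ _)
    unfold FKN.Inf
    rw [hE]
    exact mul_le_mul_of_nonneg_left h1 hZ.le
  have hpt : ∀ u ∈ M, ∀ j k, (f u - f (u ∘ Equiv.swap j k)) ^ 2
      ≤ FKN.Inf M f j k / (ρ ^ 2 * Z) := by
    intro u hu j k
    rw [le_div_iff₀ (by positivity)]
    have := FKN.pointwise hρ hκ hf u hu j k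
    rw [← hM, ← hZdef] at this
    linarith
  have hsmall : ∀ u ∈ M, ∀ j k, |f u - f (u ∘ Equiv.swap j k)| ≤ 1 / 8 := by
    intro u hu j k
    apply abs_le_of_sq_le_sq _ (by norm_num)
    refine (hpt u hu j k).trans ?_
    rw [div_le_iff₀ (by positivity)]
    have := hInfE j k
    linarith
  -- the rounded function
  have hgInf : ∀ j k, FKN.Inf M (fun u => FKN.psi (f u)) j k
      ≤ 256 / ρ ^ 2 * ε * FKN.Inf M f j k := by
    intro j k
    have h1 : FKN.Inf M (fun u => FKN.psi (f u)) j k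
        ≤ ∑ u ∈ M, 256 * (FKN.Inf M f j k / (ρ ^ 2 * Z)) * dist01 (f u) ^ 2 :=
      Finset.sum_le_sum fun u hu => FKN.psi_key _ _ _ (hsmall u hu j k) (hpt u hu j k)
    rw [← Finset.mul_sum, hd] at h1
    refine h1.trans (le_of_eq ?_)
    field_simp
  haveI : Nonempty (Fin n) := ⟨⟨0, hn⟩⟩
  obtain ⟨m, hm⟩ := FKN.poincare M FKN.ms_inv FKN.ms_trans hne (fun u => FKN.psi (f u))
  have hf2 : ∑ u ∈ M, f u ^ 2 ≤ 4 * Z := by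
    have h1 : ∑ u ∈ M, f u ^ 2 ≤ ∑ u ∈ M, (2 * dist01 (f u) ^ 2 + 2) :=
      Finset.sum_le_sum fun u _ => FKN.dist01_le _
    rw [Finset.sum_add_distrib, ← Finset.mul_sum, hd, Finset.sum_const, nsmul_eq_mul] at h1
    nlinarith
  have hvar : ∑ u ∈ M, (FKN.psi (f u) - m) ^ 2 ≤ K * (Z * ε) := by
    rw [Fintype.card_fin] at hm
    have h1 : ∑ j, ∑ k, FKN.Inf M (fun u => FKN.psi (f u)) j k
        ≤ 256 / ρ ^ 2 * ε * ∑ j, ∑ k, FKN.Inf M f j k := by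
      simp_rw [Finset.mul_sum]
      exact Finset.sum_le_sum fun j _ => Finset.sum_le_sum fun k _ => hgInf j k
    have h2 : ∑ j, ∑ k, FKN.Inf M f j k ≤ 4 * n * (4 * Z) :=
      (FKN.total_inf hf hn).trans (mul_le_mul_of_nonneg_left hf2 (by positivity))
    have h3 : 256 / ρ ^ 2 * ε * ∑ j, ∑ k, FKN.Inf M f j k
        ≤ 256 / ρ ^ 2 * ε * (4 * n * (4 * Z)) :=
      mul_le_mul_of_nonneg_left h2 (by positivity)
    have h4 : 256 / ρ ^ 2 * ε * (4 * n * (4 * Z)) = n * (K * (Z * ε)) := by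
      rw [hK]; ring
    exact le_of_mul_le_mul_left (by linarith) hn'
  have hfm : ∑ u ∈ M, (f u - m) ^ 2 ≤ (2 + 2 * K) * (Z * ε) := by
    have h1 : ∑ u ∈ M, (f u - m) ^ 2
        ≤ ∑ u ∈ M, (2 * dist01 (f u) ^ 2 + 2 * (FKN.psi (f u) - m) ^ 2) := by
      refine Finset.sum_le_sum fun u _ => ?_
      have h2 : (f u - FKN.psi (f u)) ^ 2 ≤ dist01 (f u) ^ 2 := by
        rw [← sq_abs]
        exact pow_le_pow_left₀ (abs_nonneg _) (FKN.psi_close _) 2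
      nlinarith [sq_nonneg ((f u - FKN.psi (f u)) - (FKN.psi (f u) - m))]
    rw [Finset.sum_add_distrib, ← Finset.mul_sum, ← Finset.mul_sum, hd] at h1
    linarith
  obtain ⟨c, hc, hcm⟩ := FKN.exists_c m
  have hcm2 : Z * (m - c) ^ 2 ≤ (6 + 4 * K) * (Z * ε) := by
    rw [hcm]
    have h1 : ∑ u ∈ M, dist01 m ^ 2
        ≤ ∑ u ∈ M, (2 * dist01 (f u) ^ 2 + 2 * (f u - m) ^ 2) := by
      refine Finset.sum_le_sum fun u _ => ?_
      have h2 : dist01 m ^ 2 ≤ (dist01 (f u) + |f u - m|) ^ 2 :=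
        pow_le_pow_left₀ (FKN.dist01_nonneg _) (FKN.dist01_lip _ _) 2
      rw [← sq_abs (f u - m)]
      nlinarith [sq_nonneg (dist01 (f u) - |f u - m|)]
    rw [Finset.sum_add_distrib, ← Finset.mul_sum, ← Finset.mul_sum, hd, Finset.sum_const,
      nsmul_eq_mul] at h1
    linarith
  have hfin : ∑ u ∈ M, (f u - c) ^ 2 ≤ (16 + 12 * K) * (Z * ε) := by
    have h1 : ∑ u ∈ M, (f u - c) ^ 2 ≤ ∑ u ∈ M, (2 * (f u - m) ^ 2 + 2 * (m - c) ^ 2) := by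
      refine Finset.sum_le_sum fun u _ => ?_
      nlinarith [sq_nonneg ((f u - m) - (m - c))]
    rw [Finset.sum_add_distrib, ← Finset.mul_sum, Finset.sum_const, nsmul_eq_mul] at h1
    linarith
  have hmain : msExp ℓ n κ (fun u => (f u - c) ^ 2) ≤ (16 + 12 * K) * ε := by
    rw [hE] at hfin
    exact le_of_mul_le_mul_left (by linarith) hZ
  refine ⟨c, hc, hmain, ?_⟩
  have hsq : (msExp ℓ n κ f - c) ^ 2 ≤ msExp ℓ n κ (fun u => (f u - c) ^ 2) := by
    have h1 := sq_sum_le_card_mul_sum_sq (s := M) (f := fun u => f u - c)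
    rw [Finset.sum_sub_distrib, Finset.sum_const, nsmul_eq_mul, hE f, hE, ← hZdef] at h1
    have h2 : (Z * Z) * (msExp ℓ n κ f - c) ^ 2
        ≤ (Z * Z) * msExp ℓ n κ (fun u => (f u - c) ^ 2) := by linarith
    exact le_of_mul_le_mul_left h2 (by positivity)
  apply abs_le_of_sq_le_sq _ (by positivity)
  rw [mul_pow, Real.sq_sqrt hε0]
  have : (16 + 12 * K) * ε ≤ (16 + 12 * K) ^ 2 * ε :=
    mul_le_mul_of_nonneg_right (by nlinarith) hε0
  linarith
end
end

section
/- Let M_κ be a multislice on n ≥ 4 points. If A ⊆ M_κ is nonempty with vol(A) = α, then Φ(A) ≥ 2(1−α)/(n−1). -/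
open Finset

noncomputable section

/-- The volume `|A|/|M_κ|` of a subset of the multislice. -/
def msVol (ℓ n : ℕ) (κ : Fin ℓ → ℕ) (A : Finset (Fin n → Fin ℓ)) : ℝ :=
  (A.card : ℝ) / ((multislice ℓ n κ).card : ℝ)

/-- The edge expansion `Φ(A)`: the probability that swapping two distinct coordinates (chosen
uniformly at random) of a uniformly random element of `A` gives an element outside `A`. -/
def msExpansion (ℓ n : ℕ) (A : Finset (Fin n → Fin ℓ)) : ℝ :=
  (∑ u ∈ A, ((Finset.univ.filter fun q : Fin n × Fin n =>
      q.1 ≠ q.2 ∧ (u ∘ Equiv.swap q.1 q.2) ∉ A).card : ℝ)) /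
    ((A.card : ℝ) * ((n : ℝ) * ((n : ℝ) - 1)))

section SpectralGap

open scoped InnerProductSpace

variable {ι : Type*} [DecidableEq ι] {V : Type*} [NormedAddCommGroup V] [InnerProductSpace ℝ V]

/-- Vectors invariant under all transpositions of elements of `S`. -/
def invSub (ρ : Equiv.Perm ι →* Module.End ℝ V) (S : Finset ι) : Submodule ℝ V where
  carrier := {v | ∀ i ∈ S, ∀ j ∈ S, ρ (Equiv.swap i j) v = v}
  add_mem' := by
    intro a b ha hb i hi j hj
    rw [map_add, ha i hi j hj, hb i hi j hj]
  zero_mem' := by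
    intro i _ j _
    rw [map_zero]
  smul_mem' := by
    intro c a ha i hi j hj
    rw [map_smul, ha i hi j hj]

/-- The Dirichlet form of the random transposition walk on `S`. -/
def dirForm (ρ : Equiv.Perm ι →* Module.End ℝ V) (S : Finset ι) (v : V) : ℝ :=
  ∑ i ∈ S, ∑ j ∈ S, ⟪v, v - ρ (Equiv.swap i j) v⟫_ℝ

lemma rho_mul (ρ : Equiv.Perm ι →* Module.End ℝ V) (a b : Equiv.Perm ι) (v : V) :
    ρ a (ρ b v) = ρ (a * b) v := by
  rw [map_mul]; rfl

lemma rho_swap_adj (ρ : Equiv.Perm ι →* Module.End ℝ V)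
    (hρ : ∀ σ v w, ⟪ρ σ v, ρ σ w⟫_ℝ = ⟪v, w⟫_ℝ) (i j : ι) (v w : V) :
    ⟪ρ (Equiv.swap i j) v, w⟫_ℝ = ⟪v, ρ (Equiv.swap i j) w⟫_ℝ := by
  rw [← hρ (Equiv.swap i j) (ρ (Equiv.swap i j) v) w, rho_mul, Equiv.swap_mul_self, map_one]
  rfl

lemma rho_self (ρ : Equiv.Perm ι →* Module.End ℝ V) (i : ι) (v : V) :
    ρ (Equiv.swap i i) v = v := by
  rw [Equiv.swap_self]
  change ρ 1 v = v
  rw [map_one]; rfl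

lemma swap_comm_rho (ρ : Equiv.Perm ι →* Module.End ℝ V) (i j : ι) :
    ρ (Equiv.swap i j) = ρ (Equiv.swap j i) := by
  rw [Equiv.swap_comm]

/-- Conjugation: `(a b)(k i) = ((a b) k, (a b) i) (a b)`. -/
lemma rho_conj (ρ : Equiv.Perm ι →* Module.End ℝ V) (σ : Equiv.Perm ι) (k i : ι) (v : V) :
    ρ σ (ρ (Equiv.swap k i) v) = ρ (Equiv.swap (σ k) (σ i)) (ρ σ v) := by
  rw [rho_mul, rho_mul, Equiv.mul_swap_eq_swap_mul]

/-- The symmetrised vector is invariant. -/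
lemma sum_mem_invSub (ρ : Equiv.Perm ι →* Module.End ℝ V) (S : Finset ι) (i : ι) (hi : i ∈ S)
    (g : V) (hg : g ∈ invSub ρ (S.erase i)) :
    ∑ k ∈ S, ρ (Equiv.swap k i) g ∈ invSub ρ S := by
  -- invariance under a swap not involving `i`, and one involving `i`
  have hfix : ∀ a ∈ S, ∀ b ∈ S, a ≠ i → b ≠ i → ρ (Equiv.swap a b) g = g := fun a ha b hb hai hbi =>
    hg a (Finset.mem_erase.2 ⟨hai, ha⟩) b (Finset.mem_erase.2 ⟨hbi, hb⟩)
  have hone : ∀ b ∈ S, ρ (Equiv.swap b i) (∑ k ∈ S, ρ (Equiv.swap k i) g)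
      = ∑ k ∈ S, ρ (Equiv.swap k i) g := by
    intro b hb
    rw [map_sum]
    refine Finset.sum_equiv (Equiv.swap b i) ?_ ?_
    · intro k
      by_cases h1 : k = b
      · subst h1; simp [hi, hb]
      by_cases h2 : k = i
      · subst h2; simp [hi, hb]
      rw [Equiv.swap_apply_of_ne_of_ne h1 h2]
    · intro k hk
      by_cases h1 : k = b
      · subst h1
        rw [Equiv.swap_apply_left, rho_self, rho_mul, Equiv.swap_mul_self, map_one]; rfl
      by_cases h2 : k = i
      · subst h2
        rw [Equiv.swap_apply_right, rho_self]
      rw [Equiv.swap_apply_of_ne_of_ne h1 h2]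
      by_cases h3 : b = i
      · subst h3; rw [rho_self]
      have : Equiv.swap b i * Equiv.swap k i = Equiv.swap k i * Equiv.swap b k := by
        rw [Equiv.mul_swap_eq_swap_mul (Equiv.swap k i) b k,
          Equiv.swap_apply_of_ne_of_ne (Ne.symm h1) h3, Equiv.swap_apply_left]
      rw [rho_mul, this, ← rho_mul, hfix b hb k hk h3 h2]
  intro a ha b hb
  by_cases hai : a = i
  · subst hai; rw [Equiv.swap_comm]; exact hone b hb
  by_cases hbi : b = i
  · subst hbi; exact hone a ha
  rw [map_sum]
  refine Finset.sum_equiv (Equiv.swap a b) ?_ ?_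
  · intro k
    by_cases h1 : k = a
    · subst h1; simp [ha, hb]
    by_cases h2 : k = b
    · subst h2; simp [ha, hb]
    rw [Equiv.swap_apply_of_ne_of_ne h1 h2]
  · intro k hk
    rw [rho_conj, hfix a ha b hb hai hbi,
      Equiv.swap_apply_of_ne_of_ne (Ne.symm hai) (Ne.symm hbi)]

lemma rho_orth (ρ : Equiv.Perm ι →* Module.End ℝ V)
    (hρ : ∀ σ v w, ⟪ρ σ v, ρ σ w⟫_ℝ = ⟪v, w⟫_ℝ) (S : Finset ι) (g : V)
    (hg : ∀ w ∈ invSub ρ S, ⟪g, w⟫_ℝ = 0) (i : ι) (hi : i ∈ S) :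
    ∀ w ∈ invSub ρ S, ⟪∑ k ∈ S, ρ (Equiv.swap k i) g, w⟫_ℝ = 0 := by
  intro w hw
  rw [sum_inner]
  refine Finset.sum_eq_zero fun k hk => ?_
  rw [rho_swap_adj ρ hρ, hw k hk i hi, hg w hw]

lemma sum_swap_zero (ρ : Equiv.Perm ι →* Module.End ℝ V)
    (hρ : ∀ σ v w, ⟪ρ σ v, ρ σ w⟫_ℝ = ⟪v, w⟫_ℝ) (S : Finset ι) (i : ι) (hi : i ∈ S) (g : V)
    (hgi : g ∈ invSub ρ (S.erase i))
    (hg : ∀ w ∈ invSub ρ S, ⟪g, w⟫_ℝ = 0) :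
    ∑ k ∈ S, ρ (Equiv.swap k i) g = 0 :=
  inner_self_eq_zero.1 (rho_orth ρ hρ S g hg i hi _ (sum_mem_invSub ρ S i hi g hgi))

lemma inner_offdiag (ρ : Equiv.Perm ι →* Module.End ℝ V)
    (hρ : ∀ σ v w, ⟪ρ σ v, ρ σ w⟫_ℝ = ⟪v, w⟫_ℝ) (S : Finset ι) (i j : ι) (hi : i ∈ S) (hj : j ∈ S)
    (hij : i ≠ j) (g g' : V)
    (hgi : g ∈ invSub ρ (S.erase i)) (hgj : g' ∈ invSub ρ (S.erase j))
    (hg : ∀ w ∈ invSub ρ S, ⟪g, w⟫_ℝ = 0) :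
    ((S.card : ℝ) - 1) * ⟪g, g'⟫_ℝ = - ⟪ρ (Equiv.swap j i) g, g'⟫_ℝ := by
  have h0 : ⟪∑ k ∈ S, ρ (Equiv.swap k i) g, g'⟫_ℝ = 0 := by
    rw [sum_swap_zero ρ hρ S i hi g hgi hg, inner_zero_left]
  rw [sum_inner, ← Finset.add_sum_erase S _ hj] at h0
  have h1 : ∀ k ∈ S.erase j, ⟪ρ (Equiv.swap k i) g, g'⟫_ℝ = ⟪g, g'⟫_ℝ := by
    intro k hk
    rw [rho_swap_adj ρ hρ, hgj k hk i (Finset.mem_erase.2 ⟨hij, hi⟩)]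
  rw [Finset.sum_congr rfl h1, Finset.sum_const, Finset.card_erase_of_mem hj, nsmul_eq_mul,
    Nat.cast_sub (Finset.card_pos.2 ⟨j, hj⟩), Nat.cast_one] at h0
  linarith

lemma norm_sum_bound (ρ : Equiv.Perm ι →* Module.End ℝ V)
    (hρ : ∀ σ v w, ⟪ρ σ v, ρ σ w⟫_ℝ = ⟪v, w⟫_ℝ) (S : Finset ι) (hS : S.Nonempty) (g : ι → V)
    (hgi : ∀ i ∈ S, g i ∈ invSub ρ (S.erase i))
    (hg : ∀ i ∈ S, ∀ w ∈ invSub ρ S, ⟪g i, w⟫_ℝ = 0) :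
    ((S.card : ℝ) - 1) * ⟪∑ i ∈ S, g i, ∑ i ∈ S, g i⟫_ℝ ≤ S.card * ∑ i ∈ S, ⟪g i, g i⟫_ℝ := by
  obtain ⟨o, ho⟩ := hS
  have key : ∀ i ∈ S, ∀ j ∈ S, ((S.card : ℝ) - 1) * ⟪g i, g j⟫_ℝ =
      (if i = j then (S.card : ℝ) * ⟪g i, g i⟫_ℝ else 0)
        - ⟪ρ (Equiv.swap o i) (g i), ρ (Equiv.swap o j) (g j)⟫_ℝ := by
    intro i hi j hj
    by_cases hij : i = j
    · subst hij
      rw [if_pos rfl, hρ]; ring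
    · rw [if_neg hij, inner_offdiag ρ hρ S i j hi hj hij _ _ (hgi i hi) (hgi j hj) (hg i hi),
        zero_sub, ← rho_swap_adj ρ hρ]
      congr 2
      by_cases h1 : o = j
      · subst h1; rw [rho_self]
      by_cases h2 : o = i
      · subst h2; rw [rho_self, Equiv.swap_comm]
      rw [rho_conj, Equiv.swap_apply_left, Equiv.swap_apply_of_ne_of_ne (Ne.symm h2) hij,
        hgi i hi o (Finset.mem_erase.2 ⟨h2, ho⟩) j (Finset.mem_erase.2 ⟨Ne.symm hij, hj⟩)]
  have e1 : ((S.card : ℝ) - 1) * ⟪∑ i ∈ S, g i, ∑ i ∈ S, g i⟫_ℝ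
      = S.card * ∑ i ∈ S, ⟪g i, g i⟫_ℝ
        - ⟪∑ i ∈ S, ρ (Equiv.swap o i) (g i), ∑ i ∈ S, ρ (Equiv.swap o i) (g i)⟫_ℝ := by
    simp only [sum_inner, inner_sum, Finset.mul_sum]
    rw [← Finset.sum_sub_distrib]
    refine Finset.sum_congr rfl fun i hi => ?_
    rw [Finset.sum_congr rfl (fun j hj => key j hj i hi), Finset.sum_sub_distrib,
      Finset.sum_ite_eq' S i, if_pos hi]
  have := real_inner_self_nonneg (x := ∑ i ∈ S, ρ (Equiv.swap o i) (g i))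
  linarith

lemma dirForm_add (ρ : Equiv.Perm ι →* Module.End ℝ V)
    (hρ : ∀ σ v w, ⟪ρ σ v, ρ σ w⟫_ℝ = ⟪v, w⟫_ℝ) (S : Finset ι) (p q : V)
    (hp : p ∈ invSub ρ S) : dirForm ρ S (p + q) = dirForm ρ S q := by
  unfold dirForm
  refine Finset.sum_congr rfl fun i hi => Finset.sum_congr rfl fun j hj => ?_
  have h := hp i hi j hj
  have h2 := rho_swap_adj ρ hρ i j p q
  rw [h] at h2
  rw [map_add, h, add_sub_add_left_eq_sub, inner_add_left, inner_sub_right p, ← h2]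
  ring

lemma dirForm_erase (ρ : Equiv.Perm ι →* Module.End ℝ V) (S : Finset ι) (v : V) :
    ∑ k ∈ S, dirForm ρ (S.erase k) v = ((S.card : ℝ) - 2) * dirForm ρ S v := by
  have h : ∀ k ∈ S, dirForm ρ (S.erase k) v
      = dirForm ρ S v - 2 * ∑ j ∈ S, ⟪v, v - ρ (Equiv.swap k j) v⟫_ℝ := by
    intro k hk
    unfold dirForm
    have hz : ⟪v, v - ρ (Equiv.swap k k) v⟫_ℝ = 0 := by rw [rho_self, sub_self, inner_zero_right]
    have h1 : ∀ i, ∑ j ∈ S.erase k, ⟪v, v - ρ (Equiv.swap i j) v⟫_ℝ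
        = ∑ j ∈ S, ⟪v, v - ρ (Equiv.swap i j) v⟫_ℝ - ⟪v, v - ρ (Equiv.swap k i) v⟫_ℝ := by
      intro i
      rw [Finset.sum_erase_eq_sub hk, Equiv.swap_comm i k]
    simp only [h1]
    rw [Finset.sum_sub_distrib, Finset.sum_erase_eq_sub hk, Finset.sum_erase_eq_sub hk, hz]
    ring
  rw [Finset.sum_congr rfl h, Finset.sum_sub_distrib, Finset.sum_const, nsmul_eq_mul,
    ← Finset.mul_sum]
  change _ - 2 * dirForm ρ S v = _
  ring

/-- Spectral gap of the random transposition walk. -/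
theorem spectral_gap [FiniteDimensional ℝ V] (ρ : Equiv.Perm ι →* Module.End ℝ V)
    (hρ : ∀ σ v w, ⟪ρ σ v, ρ σ w⟫_ℝ = ⟪v, w⟫_ℝ) (m : ℕ) :
    ∀ (S : Finset ι), S.card = m + 2 → ∀ v : V, (∀ w ∈ invSub ρ S, ⟪v, w⟫_ℝ = 0) →
    2 * (S.card : ℝ) * ⟪v, v⟫_ℝ ≤ dirForm ρ S v := by
  induction m with
  | zero =>
    intro S hS v hv
    obtain ⟨a, b, hab, rfl⟩ := Finset.card_eq_two.1 hS
    have h0 := sum_swap_zero ρ hρ {a, b} a (by simp) v (by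
      intro i hi j hj
      have hi' : i = b := by
        simp only [Finset.mem_erase, Finset.mem_insert, Finset.mem_singleton] at hi; tauto
      have hj' : j = b := by
        simp only [Finset.mem_erase, Finset.mem_insert, Finset.mem_singleton] at hj; tauto
      rw [hi', hj', rho_self]) hv
    rw [Finset.sum_pair hab, rho_self] at h0
    have hb : ρ (Equiv.swap b a) v = -v := (neg_eq_of_add_eq_zero_right h0).symm
    have hb2 : ρ (Equiv.swap a b) v = -v := by rw [Equiv.swap_comm, hb]
    rw [hS, dirForm, Finset.sum_pair hab, Finset.sum_pair hab, Finset.sum_pair hab, hb, hb2,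
      rho_self, rho_self, sub_self, inner_zero_right, sub_neg_eq_add, inner_add_right]
    push_cast
    linarith
  | succ m ih =>
    intro S hS v hv
    have hdec : ∀ i : ι, ∃ p ∈ invSub ρ (S.erase i), ∃ q ∈ (invSub ρ (S.erase i))ᗮ, v = p + q :=
      fun i => Submodule.exists_add_mem_mem_orthogonal (K := invSub ρ (S.erase i)) v
    choose p hp q hq hpq using hdec
    have hqw : ∀ i, ∀ w ∈ invSub ρ (S.erase i), ⟪q i, w⟫_ℝ = 0 := by
      intro i w hw
      rw [real_inner_comm]
      exact (Submodule.mem_orthogonal _ _).1 (hq i) w hw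
    have hsub : ∀ i, ∀ w ∈ invSub ρ S, w ∈ invSub ρ (S.erase i) := by
      intro i w hw a ha b hb
      exact hw a (Finset.mem_of_mem_erase ha) b (Finset.mem_of_mem_erase hb)
    have hpw : ∀ i ∈ S, ∀ w ∈ invSub ρ S, ⟪p i, w⟫_ℝ = 0 := by
      intro i _ w hw
      have h1 := hv w hw
      rw [hpq i, inner_add_left, hqw i w (hsub i w hw), add_zero] at h1
      exact h1
    have hpv : ∀ i, ⟪p i, v⟫_ℝ = ⟪p i, p i⟫_ℝ := by
      intro i
      rw [real_inner_comm]
      conv_lhs => rw [hpq i]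
      rw [inner_add_left, hqw i _ (hp i), add_zero]
    have hvv : ∀ i, ⟪q i, q i⟫_ℝ = ⟪v, v⟫_ℝ - ⟪p i, p i⟫_ℝ := by
      intro i
      have : q i = v - p i := by rw [eq_sub_iff_add_eq, add_comm]; exact (hpq i).symm
      rw [this, inner_sub_left, inner_sub_right, inner_sub_right, real_inner_comm (p i) v, hpv i]
      ring
    have hne : S.Nonempty := Finset.card_pos.1 (by omega)
    have hb := norm_sum_bound ρ hρ S hne p (fun i _ => hp i) hpw
    have hstep : ∀ i ∈ S, 2 * ((S.card : ℝ) - 1) * (⟪v, v⟫_ℝ - ⟪p i, p i⟫_ℝ)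
        ≤ dirForm ρ (S.erase i) v := by
      intro i hi
      have hc : (S.erase i).card = m + 2 := by rw [Finset.card_erase_of_mem hi]; omega
      have h1 := ih (S.erase i) hc (q i) (hqw i)
      rw [← dirForm_add ρ hρ _ (p i) (q i) (hp i), ← hpq i, hvv i, hc] at h1
      rw [hS]
      push_cast at h1 ⊢
      linarith
    have hsum := Finset.sum_le_sum hstep
    rw [dirForm_erase, ← Finset.mul_sum, Finset.sum_sub_distrib, Finset.sum_const,
      nsmul_eq_mul] at hsum
    set G := ∑ i ∈ S, ⟪p i, p i⟫_ℝ with hG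
    set s := ∑ i ∈ S, p i with hs
    have hsv : ⟪s, v⟫_ℝ = G := by
      rw [hs, sum_inner, hG]
      exact Finset.sum_congr rfl fun i _ => hpv i
    have hN : (S.card : ℝ) = m + 3 := by rw [hS]; push_cast; ring
    set N : ℝ := (S.card : ℝ) with hNdef
    have hm : (0 : ℝ) ≤ m := Nat.cast_nonneg m
    have hpos := real_inner_self_nonneg (x := N • v - (N - 1) • s)
    simp only [inner_sub_left, inner_sub_right, real_inner_smul_left, real_inner_smul_right] at hpos
    rw [real_inner_comm s v, hsv] at hpos
    have hN3 : 3 ≤ N := by linarith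
    have hGv : (N - 1) * G ≤ N * ⟪v, v⟫_ℝ := by
      have h2 := mul_le_mul_of_nonneg_left hb (by linarith : (0:ℝ) ≤ N - 1)
      have : 0 ≤ N * (N * ⟪v, v⟫_ℝ - (N - 1) * G) := by nlinarith
      have := nonneg_of_mul_nonneg_right this (by linarith)
      linarith
    have : (N - 2) * (2 * N * ⟪v, v⟫_ℝ) ≤ (N - 2) * dirForm ρ S v := by nlinarith
    exact le_of_mul_le_mul_left this (by linarith)

end SpectralGap

section MainProof

open scoped InnerProductSpace

/-- The permutation representation on functions on the cube. -/
def permRep (ℓ n : ℕ) :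
    Equiv.Perm (Fin n) →* Module.End ℝ (EuclideanSpace ℝ (Fin n → Fin ℓ)) where
  toFun σ :=
    { toFun := fun f => WithLp.toLp 2 (fun u => f (u ∘ σ))
      map_add' := by intro f g; ext u; rfl
      map_smul' := by intro c f; ext u; rfl }
  map_one' := by
    ext f u; rfl
  map_mul' := by
    intro σ τ
    refine LinearMap.ext fun f => ?_
    ext u; rfl

lemma permRep_apply (ℓ n : ℕ) (σ : Equiv.Perm (Fin n)) (f : EuclideanSpace ℝ (Fin n → Fin ℓ))
    (u : Fin n → Fin ℓ) : permRep ℓ n σ f u = f (u ∘ σ) := rfl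

lemma eucl_inner {X : Type*} [Fintype X] (f g : EuclideanSpace ℝ X) :
    ⟪f, g⟫_ℝ = ∑ u, f u * g u := by
  rw [PiLp.inner_apply]
  refine Finset.sum_congr rfl fun u _ => ?_
  simp [mul_comm]

/-- Precomposition with a permutation as a bijection of the cube. -/
def preEquiv (ℓ n : ℕ) (σ : Equiv.Perm (Fin n)) : (Fin n → Fin ℓ) ≃ (Fin n → Fin ℓ) where
  toFun u := u ∘ σ
  invFun u := u ∘ σ.symm
  left_inv u := by funext i; simp
  right_inv u := by funext i; simp

lemma permRep_inner (ℓ n : ℕ) (σ : Equiv.Perm (Fin n))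
    (f g : EuclideanSpace ℝ (Fin n → Fin ℓ)) :
    ⟪permRep ℓ n σ f, permRep ℓ n σ g⟫_ℝ = ⟪f, g⟫_ℝ := by
  rw [eucl_inner, eucl_inner]
  exact Equiv.sum_comp (preEquiv ℓ n σ) (fun u => f u * g u)

lemma multislice_comp (ℓ n : ℕ) (κ : Fin ℓ → ℕ) (σ : Equiv.Perm (Fin n)) (u : Fin n → Fin ℓ) :
    u ∘ σ ∈ multislice ℓ n κ ↔ u ∈ multislice ℓ n κ := by
  unfold multislice
  simp only [Finset.mem_filter, Finset.mem_univ, true_and]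
  refine forall_congr' fun i => ?_
  have : (Finset.univ.filter fun j => (u ∘ σ) j = i).card
      = (Finset.univ.filter fun j => u j = i).card := by
    refine Finset.card_equiv σ ?_
    intro j; simp
  rw [this]

lemma multislice_trans (ℓ n : ℕ) (κ : Fin ℓ → ℕ) (u v : Fin n → Fin ℓ)
    (hu : u ∈ multislice ℓ n κ) (hv : v ∈ multislice ℓ n κ) :
    ∃ σ : Equiv.Perm (Fin n), u ∘ σ = v := by
  unfold multislice at hu hv
  simp only [Finset.mem_filter, Finset.mem_univ, true_and] at hu hv
  have h : ∀ i, Nonempty ({j // v j = i} ≃ {j // u j = i}) := by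
    intro i
    rw [← Fintype.card_eq, Fintype.card_subtype, Fintype.card_subtype, hu, hv]
  refine ⟨(Equiv.sigmaFiberEquiv v).symm.trans
    ((Equiv.sigmaCongrRight fun i => Classical.choice (h i)).trans (Equiv.sigmaFiberEquiv u)), ?_⟩
  funext j
  exact (Classical.choice (h (v j)) ⟨j, rfl⟩ : {k // u k = v j}).2

lemma inv_perm (ℓ n : ℕ) (w : EuclideanSpace ℝ (Fin n → Fin ℓ))
    (hw : w ∈ invSub (permRep ℓ n) Finset.univ) (σ : Equiv.Perm (Fin n)) :
    permRep ℓ n σ w = w := by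
  induction σ using Equiv.Perm.swap_induction_on with
  | one => rw [map_one]; rfl
  | swap_mul f x y _ ih =>
    rw [← rho_mul, ih]
    exact hw x (Finset.mem_univ _) y (Finset.mem_univ _)

/-- The indicator function of a set. -/
def indE {X : Type*} [Fintype X] [DecidableEq X] (A : Finset X) : EuclideanSpace ℝ X :=
  WithLp.toLp 2 (fun u => if u ∈ A then 1 else 0)

lemma indE_apply {X : Type*} [Fintype X] [DecidableEq X] (A : Finset X) (u : X) :
    indE A u = if u ∈ A then 1 else 0 := rfl

lemma indE_inner {X : Type*} [Fintype X] [DecidableEq X] (A : Finset X) (f : EuclideanSpace ℝ X) :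
    ⟪indE A, f⟫_ℝ = ∑ u ∈ A, f u := by
  rw [eucl_inner]
  simp only [indE_apply, ite_mul, one_mul, zero_mul]
  rw [Finset.sum_ite_mem, Finset.univ_inter]

lemma indE_multislice_inv (ℓ n : ℕ) (κ : Fin ℓ → ℕ) :
    indE (multislice ℓ n κ) ∈ invSub (permRep ℓ n) Finset.univ := by
  intro i _ j _
  ext u
  rw [permRep_apply, indE_apply, indE_apply]
  simp only [multislice_comp]

lemma dirForm_indE (ℓ n : ℕ) (A : Finset (Fin n → Fin ℓ)) :
    dirForm (permRep ℓ n) Finset.univ (indE A) =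
      ∑ u ∈ A, ((Finset.univ.filter fun q : Fin n × Fin n =>
      q.1 ≠ q.2 ∧ (u ∘ Equiv.swap q.1 q.2) ∉ A).card : ℝ) := by
  unfold dirForm
  simp only [indE_inner]
  rw [← Fintype.sum_prod_type' (fun i j => ∑ u ∈ A,
    (indE A - permRep ℓ n (Equiv.swap i j) (indE A)) u), Finset.sum_comm]
  refine Finset.sum_congr rfl fun u hu => ?_
  rw [Finset.card_filter]
  push_cast
  refine Finset.sum_congr rfl fun q _ => ?_
  rw [PiLp.sub_apply, permRep_apply, indE_apply, indE_apply, if_pos hu]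
  by_cases h1 : q.1 = q.2
  · simp [h1, hu]
  · by_cases h2 : u ∘ Equiv.swap q.1 q.2 ∈ A <;> simp [h1, h2]

end MainProof

/-- **Edge-isoperimetric inequality for the multislice**: a set of volume `α` has expansion at
least `2(1-α)/(n-1)`. -/
theorem multislice_isoperimetry (ℓ n : ℕ) (hℓ : 2 ≤ ℓ) (hn : 4 ≤ n) (κ : Fin ℓ → ℕ)
    (hκ : ∀ i, 0 < κ i) (hsum : ∑ i, κ i = n)
    (A : Finset (Fin n → Fin ℓ)) (hA : A ⊆ multislice ℓ n κ) (hne : A.Nonempty)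
    (α : ℝ) (hα : msVol ℓ n κ A = α) :
    2 * (1 - α) / ((n : ℝ) - 1) ≤ msExpansion ℓ n A := by
  set M := multislice ℓ n κ with hM
  have hAc : (0 : ℝ) < A.card := by exact_mod_cast hne.card_pos
  have hMc : (0 : ℝ) < M.card := by exact_mod_cast (hne.mono hA).card_pos
  have hαA : α * M.card = A.card := by
    rw [← hα, msVol, div_mul_cancel₀ _ hMc.ne']
  have hinv := indE_multislice_inv ℓ n κ
  rw [← hM] at hinv
  have hMA : inner ℝ (indE M) (indE A) = (A.card : ℝ) := by
    rw [real_inner_comm, indE_inner, Finset.sum_congr rfl (fun u hu => by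
      rw [indE_apply, if_pos (hA hu)])]
    simp
  have hAA : inner ℝ (indE A) (indE A) = (A.card : ℝ) := by
    rw [indE_inner, Finset.sum_congr rfl (fun u hu => by rw [indE_apply, if_pos hu])]
    simp
  have hMM : inner ℝ (indE M) (indE M) = (M.card : ℝ) := by
    rw [indE_inner, Finset.sum_congr rfl (fun u hu => by rw [indE_apply, if_pos hu])]
    simp
  have horth : ∀ w ∈ invSub (permRep ℓ n) Finset.univ,
      inner ℝ (indE A - α • indE M) w = 0 := by
    intro w hw
    obtain ⟨u0, hu0⟩ := hne
    have hconst : ∀ u ∈ M, w u = w u0 := by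
      intro u hu
      obtain ⟨σ, hσ⟩ := multislice_trans ℓ n κ u0 u (hA hu0) hu
      rw [← hσ, ← permRep_apply, inv_perm ℓ n w hw]
    rw [inner_sub_left, real_inner_smul_left, indE_inner, indE_inner,
      Finset.sum_congr rfl hconst, Finset.sum_congr rfl (fun u hu => hconst u (hA hu))]
    simp only [Finset.sum_const, nsmul_eq_mul]
    rw [← mul_assoc, hαA, sub_self]
  have hgap := spectral_gap (permRep ℓ n) (permRep_inner ℓ n) (n - 2) Finset.univ
    (by rw [Finset.card_univ, Fintype.card_fin]; omega) _ horth
  have hadd := dirForm_add (permRep ℓ n) (permRep_inner ℓ n) Finset.univ (-(α • indE M)) (indE A)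
    (Submodule.neg_mem _ (Submodule.smul_mem _ _ hinv))
  rw [neg_add_eq_sub] at hadd
  rw [hadd, dirForm_indE, Finset.card_univ, Fintype.card_fin] at hgap
  have hnorm : inner ℝ (indE A - α • indE M) (indE A - α • indE M) = (A.card : ℝ) * (1 - α) := by
    simp only [inner_sub_left, inner_sub_right, real_inner_smul_left, real_inner_smul_right]
    rw [real_inner_comm (indE M) (indE A), hMA, hAA, hMM, hαA]
    ring
  rw [hnorm] at hgap
  have hn4 : (4 : ℝ) ≤ n := by exact_mod_cast hn
  unfold msExpansion
  rw [div_le_div_iff₀ (by linarith) (by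
    apply mul_pos hAc; apply mul_pos <;> linarith)]
  have h1 : (0 : ℝ) ≤ (n : ℝ) - 1 := by linarith
  calc 2 * (1 - α) * ((A.card : ℝ) * ((n : ℝ) * ((n : ℝ) - 1)))
      = (2 * (n : ℝ) * ((A.card : ℝ) * (1 - α))) * ((n : ℝ) - 1) := by ring
    _ ≤ _ := mul_le_mul_of_nonneg_right hgap h1
end
end
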